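/- Suppose g(r) = o(e^{-c r}) as r → ∞ for some c > 0, and fix γ > 0. Let Δ_n denote the maximum vertex degree of G_n(r̂_n(γ)). Then almost surely, lim_{n→∞} Δ_n/(log n) = γ·H₊⁻¹(1/γ). -/

import Mathlib

open MeasureTheory ProbabilityTheory Filter Set

noncomputable section

namespace RCM

/-- The toroidal metric on the unit cube. -/
def torusDist {d : ℕ} (x y : EuclideanSpace ℝ (Fin d)) : ℝ :=
  ⨅ z : Fin d → ℤ, ‖x - y - (WithLp.equiv 2 (Fin d → ℝ)).symm (fun i => (z i : ℝ))‖

/-- The half-open unit cube `S = (-1/2, 1/2]^d`. -/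
def cube (d : ℕ) : Set (EuclideanSpace ℝ (Fin d)) :=
  {x | ∀ i, x i ∈ Set.Ioc (-(1/2) : ℝ) (1/2)}

/-- The random connection model: i.i.d. uniform points `X`, coupled Poisson counts `N`,
i.i.d. uniform edge variables `U`, with the three families mutually independent, and a
non-increasing connection function `g : [0,∞) → [0,1]` with finite positive integral `α`. -/
structure Model (d : ℕ) {Ω : Type*} [MeasurableSpace Ω] (P : Measure Ω) where
  g : ℝ → ℝ
  α : ℝ
  X : ℕ → Ω → EuclideanSpace ℝ (Fin d)
  N : ℕ → Ω → ℕ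
  U : ℕ → ℕ → Ω → ℝ
  g_antitone : AntitoneOn g (Set.Ici 0)
  g_mem : ∀ r : ℝ, 0 ≤ r → g r ∈ Set.Icc (0 : ℝ) 1
  g_integrable : MeasureTheory.Integrable (fun x : EuclideanSpace ℝ (Fin d) => g ‖x‖)
  α_def : α = ∫ x : EuclideanSpace ℝ (Fin d), g ‖x‖
  α_pos : 0 < α
  X_meas : ∀ i, Measurable (X i)
  X_unif : ∀ i : ℕ, 1 ≤ i → Measure.map (X i) P = volume.restrict (cube d)
  X_indep : iIndepFun
    (fun i : {i : ℕ // 1 ≤ i} => X i) P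
  N_meas : ∀ n, Measurable (N n)
  N_mono : ∀ ω, Monotone fun n => N n ω
  N_poisson : ∀ n k : ℕ,
    P {ω | N n ω = k} = ENNReal.ofReal (Real.exp (-(n : ℝ)) * (n : ℝ) ^ k / k.factorial)
  U_meas : ∀ i j, Measurable (U i j)
  U_unif : ∀ i j : ℕ, 1 ≤ i → i < j →
    Measure.map (U i j) P = volume.restrict (Set.Icc (0 : ℝ) 1)
  U_indep : iIndepFun
    (fun p : {p : ℕ × ℕ // 1 ≤ p.1 ∧ p.1 < p.2} => U p.1.1 p.1.2) P
  families_indep : iIndep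
    (![MeasurableSpace.comap (fun ω => fun i : ℕ => X i ω) inferInstance,
       MeasurableSpace.comap (fun ω => fun n : ℕ => N n ω) inferInstance,
       MeasurableSpace.comap (fun ω => fun p : ℕ × ℕ => U p.1 p.2 ω) inferInstance]) P

variable {d : ℕ} {Ω : Type*} [MeasurableSpace Ω] {P : Measure Ω}

/-- Adjacency in the graph `G_n(r)`: vertices `1 ≤ i,j ≤ N_n` are joined iff
`U_{ij} ≤ g(dist(X_i,X_j)/r)`. -/
def adj (M : Model d P) (n : ℕ) (r : ℝ) (ω : Ω) (i j : ℕ) : Prop :=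
  i ≠ j ∧ 1 ≤ i ∧ 1 ≤ j ∧ i ≤ M.N n ω ∧ j ≤ M.N n ω ∧
    M.U (min i j) (max i j) ω ≤ M.g (torusDist (M.X i ω) (M.X j ω) / r)

/-- The degree of vertex `i` in `G_n(r)`. -/
def deg (M : Model d P) (n : ℕ) (r : ℝ) (ω : Ω) (i : ℕ) : ℕ :=
  {j : ℕ | adj M n r ω i j}.ncard

/-- `W_n(r)`, the number of isolated vertices of `G_n(r)`. -/
def isolatedCount (M : Model d P) (n : ℕ) (r : ℝ) (ω : Ω) : ℕ :=
  {i : ℕ | 1 ≤ i ∧ i ≤ M.N n ω ∧ deg M n r ω i = 0}.ncard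


/-- `r̂_n(γ)` defined by `r̂_n(γ)^d = γ log n / (α n)`. -/
def rhat (M : Model d P) (γ : ℝ) (n : ℕ) : ℝ :=
  (γ * Real.log n / (M.α * n)) ^ ((1 : ℝ) / d)

/-- `d_n`, the critical parameter for absence of isolated nodes. -/
def critRadius (M : Model d P) (n : ℕ) (ω : Ω) : ℝ :=
  sInf {r : ℝ | 0 < r ∧ isolatedCount M n r ω = 0}

/-- The maximum vertex degree `Δ_n` of `G_n(r)`. -/
def maxDeg (M : Model d P) (n : ℕ) (r : ℝ) (ω : Ω) : ℕ :=
  (Finset.Icc 1 (M.N n ω)).sup (deg M n r ω)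

/-- The minimum vertex degree `δ_n` of `G_n(r)`. -/
def minDeg (M : Model d P) (n : ℕ) (r : ℝ) (ω : Ω) : ℕ :=
  sInf {k : ℕ | ∃ i, 1 ≤ i ∧ i ≤ M.N n ω ∧ deg M n r ω i = k}

/-- The length (toroidal metric) of the longest edge of `G_n(r)` (`0` if there are no edges). -/
def longestEdge (M : Model d P) (n : ℕ) (r : ℝ) (ω : Ω) : ℝ :=
  sSup ({0} ∪ {t : ℝ | ∃ i j, adj M n r ω i j ∧ t = torusDist (M.X i ω) (M.X j ω)})

/-- Connectivity of `G_n(r)`: any two vertices are joined by a path. -/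
def connectedGraph (M : Model d P) (n : ℕ) (r : ℝ) (ω : Ω) : Prop :=
  ∀ i j : ℕ, 1 ≤ i → i ≤ M.N n ω → 1 ≤ j → j ≤ M.N n ω →
    Relation.ReflTransGen (adj M n r ω) i j

/-- `H(x) = 1 - x + x log x` (with `H(0) = 1`, since `log 0 = 0` in Lean). -/
def H (x : ℝ) : ℝ := 1 - x + x * Real.log x

/-- The inverse of the restriction of `H` to `[1, ∞)`. -/
def Hplusinv (y : ℝ) : ℝ := sInf {x : ℝ | 1 ≤ x ∧ y ≤ H x}

/-- The inverse of the restriction of `H` to `[0, 1]`. -/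
def Hminusinv (y : ℝ) : ℝ := sInf {x : ℝ | 0 ≤ x ∧ H x ≤ y}

/-- The standard normal distribution function. -/
def stdNormalCDF (x : ℝ) : ℝ :=
  ∫ t in Set.Iic x, Real.exp (-t ^ 2 / 2) / Real.sqrt (2 * Real.pi)

/-!
The degree of a fixed vertex among `m ≈ n` vertices is binomial with mean about `γ log n`, so it
exceeds `y log n` with probability `n ^ (-I + o(1))`, where `I = γ H(y / γ)` is the Poisson rate.
Hence the threshold is the `y > γ` at which `I = 1`.

If `I > 1`, a union bound over the vertices shows that no degree exceeds `y log n`. If `I < 1`, let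
a small proportion of the vertices serve as centres and count only their edges of length at most
`K r` to most of the others; for large `K` this changes the mean by an arbitrarily small proportion.
Given the positions of two centres at distance more than `2 K r`, an edge to one of them excludes an
edge to the other, so the two counts are negatively correlated, whereas close pairs are rare. The
second moment method then produces a centre of degree at least `y log n`.

Both failure probabilities are powers `n ^ (-δ)`, summable along `n = k ^ p` with `p` large. Since
degrees grow with the vertex set and with the radius, the values at consecutive powers bracket all
the others, and the Chernoff bound for the Poisson distribution controls the number of vertices.
-/

/-! ### The torus -/

section Torus

variable {d : ℕ}

/-- The integer vector nearest to `x - y`, at which the infimum defining `torusDist x y` is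
attained. -/
def nearestLattice (x y : EuclideanSpace ℝ (Fin d)) : Fin d → ℤ :=
  fun i => round (x i - y i)

lemma torusDist_le (x y : EuclideanSpace ℝ (Fin d)) (z : Fin d → ℤ) :
    torusDist x y ≤ ‖x - y - (WithLp.equiv 2 (Fin d → ℝ)).symm (fun i => (z i : ℝ))‖ :=
  ciInf_le ⟨0, by rintro _ ⟨z, rfl⟩; exact norm_nonneg _⟩ z

lemma torusDist_eq_norm_nearestLattice (x y : EuclideanSpace ℝ (Fin d)) :
    torusDist x y =
      ‖x - y - (WithLp.equiv 2 (Fin d → ℝ)).symm (fun i => (nearestLattice x y i : ℝ))‖ := by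
  refine le_antisymm (torusDist_le x y _) (le_ciInf fun z => ?_)
  rw [EuclideanSpace.norm_eq, EuclideanSpace.norm_eq]
  refine Real.sqrt_le_sqrt (Finset.sum_le_sum fun i _ => ?_)
  refine pow_le_pow_left₀ (norm_nonneg _) ?_ 2
  simpa [nearestLattice] using round_le (x i - y i) (z i)

lemma torusDist_eq_sqrt (x y : EuclideanSpace ℝ (Fin d)) :
    torusDist x y =
      Real.sqrt (∑ i, ‖((x i : ℝ) : UnitAddCircle) - ((y i : ℝ) : UnitAddCircle)‖ ^ 2) := by
  rw [torusDist_eq_norm_nearestLattice, EuclideanSpace.norm_eq]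
  congr 1
  refine Finset.sum_congr rfl fun i _ => ?_
  rw [← AddCircle.coe_sub, UnitAddCircle.norm_eq]
  simp [nearestLattice]

lemma torusDist_nonneg (x y : EuclideanSpace ℝ (Fin d)) : 0 ≤ torusDist x y :=
  torusDist_eq_norm_nearestLattice x y ▸ norm_nonneg _

lemma torusDist_le_add (x x' y : EuclideanSpace ℝ (Fin d)) :
    torusDist x x' ≤ torusDist x y + torusDist x' y := by
  rw [torusDist_eq_norm_nearestLattice x y, torusDist_eq_norm_nearestLattice x' y]
  refine (torusDist_le x x' (nearestLattice x y - nearestLattice x' y)).trans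
    ((le_of_eq ?_).trans (norm_sub_le _ _))
  congr 1
  ext i
  simp
  ring

lemma continuous_coe_unitAddCircle : Continuous fun t : ℝ => (t : UnitAddCircle) :=
  AddCircle.continuous_mk' 1

lemma continuous_torusDist :
    Continuous fun p : EuclideanSpace ℝ (Fin d) × EuclideanSpace ℝ (Fin d) =>
      torusDist p.1 p.2 := by
  have := continuous_coe_unitAddCircle
  simp_rw [torusDist_eq_sqrt]
  fun_prop

lemma measurable_torusDist {β : Type*} [MeasurableSpace β] {f h : β → EuclideanSpace ℝ (Fin d)}
    (hf : Measurable f) (hh : Measurable h) : Measurable fun b => torusDist (f b) (h b) :=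
  (continuous_torusDist.measurable.comp (hf.prodMk hh) :)

lemma cube_eq_preimage_pi (d : ℕ) :
    cube d = WithLp.ofLp ⁻¹' univ.pi fun _ : Fin d => Ioc (-(1 / 2) : ℝ) (-(1 / 2) + 1) := by
  ext x
  rw [Set.mem_preimage, Set.mem_univ_pi]
  norm_num [cube]

lemma measurableSet_cube (d : ℕ) : MeasurableSet (cube d) := by
  rw [cube_eq_preimage_pi]
  exact (PiLp.volume_preserving_ofLp (Fin d)).measurable
    (MeasurableSet.univ_pi fun _ => measurableSet_Ioc)

lemma measurePreserving_cube_coe (d : ℕ) :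
    MeasurePreserving
      (fun (y : EuclideanSpace ℝ (Fin d)) (i : Fin d) => ((y i : ℝ) : UnitAddCircle))
      (volume.restrict (cube d)) volume := by
  have h_coe : MeasurePreserving (fun (y : Fin d → ℝ) (i : Fin d) => ((y i : ℝ) : UnitAddCircle))
      (Measure.pi fun _ : Fin d => volume.restrict (Ioc (-(1 / 2) : ℝ) (-(1 / 2) + 1))) volume :=
    measurePreserving_pi _ _ fun _ => UnitAddCircle.measurePreserving_mk (-(1 / 2))
  have h_ofLp := (PiLp.volume_preserving_ofLp (Fin d)).restrict_preimage
    (MeasurableSet.univ_pi fun _ : Fin d =>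
      measurableSet_Ioc (a := -(1 / 2 : ℝ)) (b := -(1 / 2) + 1))
  rw [← cube_eq_preimage_pi, volume_pi, Measure.restrict_pi_pi] at h_ofLp
  exact h_coe.comp h_ofLp

lemma lintegral_cube_eq_lintegral_pi_unitAddCircle {F : ℝ → ENNReal} (hF : Measurable F) :
    ∫⁻ y in cube d, F ‖y‖ =
      ∫⁻ c : Fin d → UnitAddCircle, F (Real.sqrt (∑ i, ‖c i‖ ^ 2)) := by
  have hmeas : Measurable fun c : Fin d → UnitAddCircle => F (Real.sqrt (∑ i, ‖c i‖ ^ 2)) :=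
    hF.comp (Continuous.measurable (by fun_prop))
  rw [← (measurePreserving_cube_coe d).lintegral_comp hmeas]
  refine setLIntegral_congr_fun (measurableSet_cube d) fun y hy => ?_
  have hnorm (i : Fin d) : ‖((y i : ℝ) : UnitAddCircle)‖ = ‖y i‖ := by
    rw [Real.norm_eq_abs, AddCircle.norm_coe_eq_abs_iff _ one_ne_zero, abs_one]
    exact abs_le.2 ⟨(hy i).1.le, (hy i).2⟩
  simp only [EuclideanSpace.norm_eq, hnorm]

lemma lintegral_cube_torusDist (x : EuclideanSpace ℝ (Fin d)) {F : ℝ → ENNReal}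
    (hF : Measurable F) :
    ∫⁻ y in cube d, F (torusDist x y) = ∫⁻ y in cube d, F ‖y‖ := by
  let x' : Fin d → UnitAddCircle := fun i => (x i : ℝ)
  have hmeas : Measurable fun c : Fin d → UnitAddCircle =>
      F (Real.sqrt (∑ i, ‖x' i - c i‖ ^ 2)) := hF.comp (Continuous.measurable (by fun_prop))
  calc ∫⁻ y in cube d, F (torusDist x y)
      = ∫⁻ c : Fin d → UnitAddCircle, F (Real.sqrt (∑ i, ‖x' i - c i‖ ^ 2)) := by
        rw [← (measurePreserving_cube_coe d).lintegral_comp hmeas]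
        simp_rw [torusDist_eq_sqrt, x']
    _ = ∫⁻ c : Fin d → UnitAddCircle, F (Real.sqrt (∑ i, ‖c i‖ ^ 2)) := by
        simp_rw [norm_sub_rev]
        exact lintegral_sub_right_eq_self
          (fun c : Fin d → UnitAddCircle => F (Real.sqrt (∑ i, ‖c i‖ ^ 2))) x'
    _ = ∫⁻ y in cube d, F ‖y‖ := (lintegral_cube_eq_lintegral_pi_unitAddCircle hF).symm

lemma volume_cube_torusDist_le (x : EuclideanSpace ℝ (Fin d)) (ρ : ℝ) :
    volume.restrict (cube d) {y | torusDist x y ≤ ρ} ≤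
      volume (Metric.closedBall (0 : EuclideanSpace ℝ (Fin d)) ρ) := by
  have hF : Measurable ((Iic ρ).indicator (1 : ℝ → ENNReal)) :=
    measurable_one.indicator measurableSet_Iic
  calc volume.restrict (cube d) {y | torusDist x y ≤ ρ}
      = ∫⁻ y in cube d, (Iic ρ).indicator 1 (torusDist x y) :=
        (lintegral_indicator_one
          (measurable_torusDist measurable_const measurable_id measurableSet_Iic)).symm
    _ = ∫⁻ y in cube d, (Iic ρ).indicator 1 ‖y‖ := lintegral_cube_torusDist x hF
    _ = volume.restrict (cube d) {y | ‖y‖ ≤ ρ} :=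
        lintegral_indicator_one (measurable_norm measurableSet_Iic)
    _ ≤ volume (Metric.closedBall (0 : EuclideanSpace ℝ (Fin d)) ρ) := by
        refine (Measure.restrict_apply_le _ _).trans (measure_mono fun y hy => ?_)
        simpa using hy

end Torus

/-! ### The Poisson rate function -/

section Rate

variable {μ x y s : ℝ}

lemma H_eq_klFun : H = InformationTheory.klFun := by
  funext x
  rw [H, InformationTheory.klFun]
  ring

lemma continuous_H : Continuous H := H_eq_klFun ▸ InformationTheory.continuous_klFun

lemma H_pos (hx : 0 ≤ x) (hx1 : x ≠ 1) : 0 < H x := by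
  rw [H_eq_klFun]
  exact (InformationTheory.klFun_nonneg hx).lt_of_ne'
    (mt (InformationTheory.klFun_eq_zero_iff hx).1 hx1)

lemma strictMonoOn_H : StrictMonoOn H (Ici 1) := by
  refine strictMonoOn_of_deriv_pos (convex_Ici 1) continuous_H.continuousOn fun x hx => ?_
  rw [interior_Ici, mem_Ioi] at hx
  rw [H_eq_klFun, InformationTheory.deriv_klFun]
  exact Real.log_pos hx

lemma Hplusinv_mem (y : ℝ) : 1 ≤ Hplusinv y ∧ y ≤ H (Hplusinv y) := by
  have hclosed : IsClosed {x : ℝ | 1 ≤ x ∧ y ≤ H x} :=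
    isClosed_Ici.inter (isClosed_Ici.preimage continuous_H)
  have hlarge : ∀ᶠ x in atTop, y ≤ H x := by
    rw [H_eq_klFun]
    exact InformationTheory.tendsto_klFun_atTop.eventually_ge_atTop y
  exact hclosed.csInf_mem ((eventually_ge_atTop 1).and hlarge).exists ⟨1, fun x hx => hx.1⟩

lemma one_lt_Hplusinv (hy : 0 < y) : 1 < Hplusinv y := by
  obtain ⟨h1, hH⟩ := Hplusinv_mem y
  refine h1.lt_of_ne' fun h => ?_
  rw [h, H, Real.log_one] at hH
  linarith

lemma lt_H_of_Hplusinv_lt (hx : Hplusinv y < x) : y < H x := by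
  obtain ⟨h1, hH⟩ := Hplusinv_mem y
  exact hH.trans_lt (strictMonoOn_H h1 (h1.trans hx.le) hx)

lemma H_lt_of_lt_Hplusinv (h1 : 1 ≤ x) (hx : x < Hplusinv y) : H x < y :=
  not_le.1 fun h => notMem_of_lt_csInf hx ⟨1, fun _ hx => hx.1⟩ ⟨h1, h⟩

/-- The Cramér rate function at `y` of the Poisson distribution with mean `μ > 0`. -/
def poissonRate (μ y : ℝ) : ℝ := μ * H (y / μ)

lemma poissonRate_eq (hμ : μ ≠ 0) (y : ℝ) :
    poissonRate μ y = μ - y + y * Real.log (y / μ) := by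
  rw [poissonRate, H]
  field_simp

lemma poissonRate_mul_mul (hs : s ≠ 0) (μ y : ℝ) :
    poissonRate (μ * s) (y * s) = poissonRate μ y * s := by
  rw [poissonRate, poissonRate, mul_div_mul_right _ _ hs]
  ring

lemma poissonRate_pos (hμ : 0 < μ) (hy : 0 ≤ y) (hne : y ≠ μ) : 0 < poissonRate μ y :=
  mul_pos hμ (H_pos (by positivity) (by rwa [Ne, div_eq_one_iff_eq hμ.ne']))

lemma continuousAt_poissonRate_left (hμ : μ ≠ 0) (y : ℝ) :
    ContinuousAt (fun μ => poissonRate μ y) μ :=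
  continuousAt_id.mul (continuous_H.continuousAt.comp (continuousAt_const.div continuousAt_id hμ))

lemma one_lt_poissonRate (hμ : 0 < μ) (hy : μ * Hplusinv (1 / μ) < y) : 1 < poissonRate μ y := by
  rw [poissonRate, mul_comm, ← div_lt_iff₀ hμ]
  exact lt_H_of_Hplusinv_lt ((lt_div_iff₀' hμ).2 hy)

lemma poissonRate_lt_one (hμ : 0 < μ) (hμy : μ ≤ y) (hy : y < μ * Hplusinv (1 / μ)) :
    poissonRate μ y < 1 := by
  rw [poissonRate, mul_comm, ← lt_div_iff₀ hμ]
  exact H_lt_of_lt_Hplusinv ((one_le_div hμ).2 hμy) ((div_lt_iff₀' hμ).2 hy)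

lemma lt_mul_Hplusinv (hμ : 0 < μ) : μ < μ * Hplusinv (1 / μ) :=
  lt_mul_of_one_lt_right hμ (one_lt_Hplusinv (one_div_pos.2 hμ))

end Rate

/-! ### Binomial tails -/

section Binomial

/-- The upper tail `P(Bin(N, q) ≥ k)` of the binomial distribution, as a function of `q`, `N`
and `k`, computed by conditioning on one of the trials. -/
def binTail (q : ℝ) : ℕ → ℕ → ℝ
  | _, 0 => 1
  | 0, _ + 1 => 0
  | N + 1, k + 1 => (1 - q) * binTail q N (k + 1) + q * binTail q N k

lemma binTail_zero_right (q : ℝ) (N : ℕ) : binTail q N 0 = 1 := by cases N <;> rfl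

lemma binTail_succ_succ (q : ℝ) (N k : ℕ) :
    binTail q (N + 1) (k + 1) = (1 - q) * binTail q N (k + 1) + q * binTail q N k := rfl

variable {q : ℝ}

lemma antitone_binTail (h0 : 0 ≤ q) (h1 : q ≤ 1) (N : ℕ) : Antitone (binTail q N) := by
  refine antitone_nat_of_succ_le fun k => ?_
  have := sub_nonneg.2 h1
  induction N generalizing k with
  | zero => cases k <;> simp [binTail]
  | succ N ih =>
    cases k with
    | zero =>
      calc binTail q (N + 1) 1 ≤ (1 - q) * binTail q N 0 + q * binTail q N 0 := by
            rw [binTail_succ_succ]; gcongr; exact ih 0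
        _ = binTail q (N + 1) 0 := by simp only [binTail_zero_right]; ring
    | succ k =>
      rw [binTail_succ_succ, binTail_succ_succ]
      gcongr <;> exact ih _

lemma binTail_le_exp_mul_pow {t : ℝ} (h0 : 0 ≤ q) (h1 : q ≤ 1) (ht : 0 ≤ t) (N k : ℕ) :
    binTail q N k ≤ Real.exp (-(t * k)) * (1 + q * (Real.exp t - 1)) ^ N := by
  have hb : 1 ≤ 1 + q * (Real.exp t - 1) := by
    have := mul_nonneg h0 (sub_nonneg.2 (Real.one_le_exp ht))
    linarith
  induction N generalizing k with
  | zero => cases k <;> simp [binTail, Real.exp_nonneg]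
  | succ N ih =>
    cases k with
    | zero => simpa [binTail] using one_le_pow₀ hb
    | succ k =>
      have hexp : Real.exp (-(t * k)) = Real.exp (-(t * ((k + 1 : ℕ) : ℝ))) * Real.exp t := by
        rw [← Real.exp_add]; push_cast; ring_nf
      have h_fail := mul_le_mul_of_nonneg_left (ih (k + 1)) (sub_nonneg.2 h1)
      have h_succ := mul_le_mul_of_nonneg_left (ih k) h0
      rw [hexp] at h_succ
      rw [binTail_succ_succ]
      exact (add_le_add h_fail h_succ).trans (le_of_eq (by ring))

lemma binTail_le_exp_neg_poissonRate {μ y : ℝ} {N k : ℕ} (h0 : 0 ≤ q) (h1 : q ≤ 1) (hμ : 0 < μ)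
    (hN : N * q ≤ μ) (hμy : μ ≤ y) (hk : y ≤ k) :
    binTail q N k ≤ Real.exp (-poissonRate μ y) := by
  have hratio : 1 ≤ y / μ := (one_le_div hμ).2 hμy
  have ht : 0 ≤ Real.log (y / μ) := Real.log_nonneg hratio
  have hpow : (1 + q * (y / μ - 1)) ^ N ≤ Real.exp (μ * (y / μ - 1)) := by
    have : 0 ≤ q * (y / μ - 1) := mul_nonneg h0 (by linarith)
    calc (1 + q * (y / μ - 1)) ^ N ≤ Real.exp (q * (y / μ - 1)) ^ N := by
          gcongr; rw [add_comm]; exact Real.add_one_le_exp _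
      _ = Real.exp (N * q * (y / μ - 1)) := by rw [← Real.exp_nat_mul]; ring_nf
      _ ≤ Real.exp (μ * (y / μ - 1)) := by gcongr
  calc binTail q N k
      ≤ Real.exp (-(Real.log (y / μ) * k)) * (1 + q * (y / μ - 1)) ^ N := by
        simpa only [Real.exp_log (zero_lt_one.trans_le hratio)]
          using binTail_le_exp_mul_pow h0 h1 ht N k
    _ ≤ Real.exp (-(Real.log (y / μ) * y)) * Real.exp (μ * (y / μ - 1)) := by gcongr
    _ = Real.exp (-poissonRate μ y) := by
        rw [← Real.exp_add, poissonRate_eq hμ.ne']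
        congr 1
        field_simp
        ring

lemma choose_mul_le_binTail (h0 : 0 ≤ q) (h1 : q ≤ 1) (N k : ℕ) :
    (N.choose k : ℝ) * q ^ k * (1 - q) ^ N ≤ binTail q N k := by
  have hq : 0 ≤ 1 - q := sub_nonneg.2 h1
  induction N generalizing k with
  | zero => cases k <;> simp [binTail]
  | succ N ih =>
    cases k with
    | zero => simpa [binTail] using pow_le_one₀ hq (by linarith)
    | succ k =>
      have hle : (1 - q) ^ (N + 1) ≤ (1 - q) ^ N := pow_le_pow_of_le_one hq (by linarith) (by simp)
      calc ((N + 1).choose (k + 1) : ℝ) * q ^ (k + 1) * (1 - q) ^ (N + 1)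
          = (1 - q) * ((N.choose (k + 1) : ℝ) * q ^ (k + 1) * (1 - q) ^ N) +
              q * ((N.choose k : ℝ) * q ^ k * (1 - q) ^ (N + 1)) := by
            rw [Nat.choose_succ_succ]; push_cast; ring
        _ ≤ (1 - q) * ((N.choose (k + 1) : ℝ) * q ^ (k + 1) * (1 - q) ^ N) +
              q * ((N.choose k : ℝ) * q ^ k * (1 - q) ^ N) := by gcongr
        _ ≤ binTail q (N + 1) (k + 1) := by
            rw [binTail_succ_succ]; gcongr <;> exact ih _

lemma factorial_le_stirling {k : ℕ} (hk : k ≠ 0) :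
    (k.factorial : ℝ) ≤ Real.exp 1 * √k * (k / Real.exp 1) ^ k := by
  obtain ⟨m, rfl⟩ := Nat.exists_eq_succ_of_ne_zero hk
  have h : Stirling.stirlingSeq (m + 1) ≤ Stirling.stirlingSeq 1 :=
    Stirling.stirlingSeq'_antitone (Nat.zero_le m)
  rw [Stirling.stirlingSeq_one, Stirling.stirlingSeq, div_le_iff₀ (by positivity)] at h
  refine h.trans (le_of_eq ?_)
  rw [Real.sqrt_mul zero_le_two]
  field_simp

lemma exp_le_binTail {s : ℝ} {N k : ℕ} (h0 : 0 ≤ q) (h1 : q < 1) (hk : k ≠ 0) (hkN : k ≤ N)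
    (hs : 0 < s) (hsN : s ≤ ((N : ℝ) - k) * q) :
    Real.exp (k * (Real.log s - Real.log k + 1) - Real.log k / 2 - 1 - N * (q / (1 - q))) ≤
      binTail q N k := by
  have hk0 : (0 : ℝ) < k := Nat.cast_pos.2 (Nat.pos_of_ne_zero hk)
  have hq : 0 < 1 - q := sub_pos.2 h1
  have hchoose : ((N : ℝ) - k) ^ k / k.factorial ≤ N.choose k := by
    refine le_trans ?_ (Nat.pow_le_choose k N)
    rw [← Nat.cast_sub hkN]
    gcongr
    omega
  have hexp : Real.exp (-(q / (1 - q))) ≤ 1 - q := by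
    rw [← Real.le_log_iff_exp_le hq]
    refine le_trans (le_of_eq ?_) (Real.one_sub_inv_le_log_of_pos hq)
    field_simp
    ring
  calc Real.exp (k * (Real.log s - Real.log k + 1) - Real.log k / 2 - 1 - N * (q / (1 - q)))
      = Real.exp (Real.log s) ^ k / (Real.exp 1 * Real.exp (Real.log k / 2) *
            (Real.exp (Real.log k) / Real.exp 1) ^ k) * Real.exp (-(q / (1 - q))) ^ N := by
        simp only [← Real.exp_sub, ← Real.exp_add, ← Real.exp_nat_mul]
        congr 1
        ring
    _ = s ^ k / (Real.exp 1 * √k * (k / Real.exp 1) ^ k) * Real.exp (-(q / (1 - q))) ^ N := by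
        rw [← Real.log_sqrt hk0.le, Real.exp_log hs, Real.exp_log hk0,
          Real.exp_log (Real.sqrt_pos.2 hk0)]
    _ ≤ (((N : ℝ) - k) * q) ^ k / k.factorial * (1 - q) ^ N := by
        gcongr
        · exact div_nonneg (pow_nonneg (hs.le.trans hsN) _) (by positivity)
        · exact pow_nonneg (hs.le.trans hsN) _
        · exact factorial_le_stirling hk
    _ = ((N : ℝ) - k) ^ k / k.factorial * q ^ k * (1 - q) ^ N := by
        rw [mul_pow]; ring
    _ ≤ N.choose k * q ^ k * (1 - q) ^ N := by gcongr
    _ ≤ binTail q N k := choose_mul_le_binTail h0 h1.le N k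

variable {ι : Type*} {l : Filter ι} {q Λ : ι → ℝ} {N k : ι → ℕ} {μ κ : ℝ}

lemma tendsto_sub_mul_div (hq : Tendsto q l (nhds 0))
    (hN : Tendsto (fun i => N i * q i / Λ i) l (nhds μ))
    (hk : Tendsto (fun i => k i / Λ i) l (nhds κ)) :
    Tendsto (fun i => ((N i : ℝ) - k i) * q i / Λ i) l (nhds μ) := by
  have := hN.sub (hk.mul hq)
  rw [mul_zero, sub_zero] at this
  exact this.congr fun i => by ring

lemma tendsto_binTail_exponent_div (hΛ : Tendsto Λ l atTop) (hq : Tendsto q l (nhds 0))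
    (hN : Tendsto (fun i => N i * q i / Λ i) l (nhds μ))
    (hk : Tendsto (fun i => k i / Λ i) l (nhds κ)) (hμ : 0 < μ) (hκ : 0 < κ) :
    Tendsto (fun i => (k i * (Real.log (((N i : ℝ) - k i) * q i) - Real.log (k i) + 1) -
      Real.log (k i) / 2 - 1 - N i * (q i / (1 - q i))) / Λ i) l (nhds (-poissonRate μ κ)) := by
  have hs := tendsto_sub_mul_div hq hN hk
  have hlog_s := hs.log hμ.ne'
  have hlog_k := hk.log hκ.ne'
  have hlog_Λ : Tendsto (fun i => Real.log (Λ i) / Λ i) l (nhds 0) :=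
    Real.isLittleO_log_id_atTop.tendsto_div_nhds_zero.comp hΛ
  have hΛ_inv : Tendsto (fun i => (Λ i)⁻¹) l (nhds 0) := tendsto_inv_atTop_zero.comp hΛ
  have hlim := (((hk.mul ((hlog_s.sub hlog_k).add_const 1)).sub
    ((hlog_k.mul hΛ_inv).add hlog_Λ |>.div_const 2)).sub hΛ_inv).sub
      (hN.div (tendsto_const_nhds.sub hq) (by norm_num : (1 : ℝ) - 0 ≠ 0))
  have hval : κ * (Real.log μ - Real.log κ + 1) - (Real.log κ * 0 + 0) / 2 - 0 - μ / (1 - 0) =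
      -poissonRate μ κ := by
    rw [poissonRate_eq hμ.ne', Real.log_div hκ.ne' hμ.ne']; ring
  rw [hval] at hlim
  refine hlim.congr' ?_
  filter_upwards [hΛ.eventually_gt_atTop 0, hs.eventually_const_lt hμ,
    hk.eventually_const_lt hκ] with i hΛi hsi hki
  have hs0 : ((N i : ℝ) - k i) * q i ≠ 0 := fun h => by simp [h] at hsi
  have hk0 : (k i : ℝ) ≠ 0 := fun h => by simp [h] at hki
  rw [Pi.div_apply, Real.log_div hs0 hΛi.ne', Real.log_div hk0 hΛi.ne']
  field_simp
  ring

/-- For `N q ≈ μ Λ` and `k ≈ κ Λ` with `q → 0` the binomial tail behaves like the Poisson one,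
which is `exp (-(poissonRate μ κ + o(1)) Λ)` when `κ ≥ μ`. -/
lemma eventually_exp_le_binTail {c : ℝ} (hΛ : Tendsto Λ l atTop) (hq : Tendsto q l (nhds 0))
    (hN : Tendsto (fun i => N i * q i / Λ i) l (nhds μ))
    (hk : Tendsto (fun i => k i / Λ i) l (nhds κ)) (hμ : 0 < μ) (hκ : 0 < κ)
    (hc : poissonRate μ κ < c) :
    ∀ᶠ i in l, Real.exp (-(c * Λ i)) ≤ binTail (q i) (N i) (k i) := by
  have hE := tendsto_binTail_exponent_div hΛ hq hN hk hμ hκ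
  have hs := tendsto_sub_mul_div hq hN hk
  filter_upwards [hE.eventually_const_lt (neg_lt_neg hc), hΛ.eventually_gt_atTop 0,
    hs.eventually_const_lt hμ, hN.eventually_const_lt hμ, hk.eventually_const_lt hκ,
    hq.eventually_lt_const one_pos] with i hEi hΛi hsi hNi hki hqi
  have hNq : 0 < N i * q i := (div_pos_iff_of_pos_right hΛi).1 hNi
  have hs0 : 0 < ((N i : ℝ) - k i) * q i := (div_pos_iff_of_pos_right hΛi).1 hsi
  have hk0 : (0 : ℝ) < k i := (div_pos_iff_of_pos_right hΛi).1 hki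
  have hq0 : 0 < q i := pos_of_mul_pos_right hNq (Nat.cast_nonneg _)
  have hkN : (k i : ℝ) < N i := sub_pos.1 (pos_of_mul_pos_left hs0 hq0.le)
  refine le_trans (Real.exp_le_exp.2 ?_) (exp_le_binTail hq0.le hqi (Nat.cast_pos.1 hk0).ne'
    (Nat.cast_lt.1 hkN).le hs0 le_rfl)
  rw [lt_div_iff₀ hΛi] at hEi
  linarith

end Binomial

/-! ### Counting independent events -/

section Count

variable {Ω ι : Type*}

open scoped Classical in
/-- The number of events `A j`, `j ∈ s`, that occur. -/
def count (A : ι → Set Ω) (s : Finset ι) (ω : Ω) : ℕ := (s.filter fun j => ω ∈ A j).card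

variable {A B : ι → Set Ω} {s t : Finset ι} {a : ι} {k l : ℕ}

lemma count_empty (A : ι → Set Ω) (ω : Ω) : count A ∅ ω = 0 := by simp [count]

lemma count_insert [DecidableEq ι] (A : ι → Set Ω) (ha : a ∉ s) (ω : Ω) [Decidable (ω ∈ A a)] :
    count A (insert a s) ω = count A s ω + if ω ∈ A a then 1 else 0 := by
  rw [count, Finset.filter_insert]
  split_ifs with h
  · rw [Finset.card_insert_of_notMem (by simp [ha]), count]
  · rw [count, add_zero]

lemma count_mono (hst : s ⊆ t) {ω : Ω} (hAB : ∀ j ∈ s, ω ∈ A j → ω ∈ B j) :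
    count A s ω ≤ count B t ω := by
  classical
  refine Finset.card_le_card fun j hj => ?_
  rw [Finset.mem_filter] at hj ⊢
  exact ⟨hst hj.1, hAB j hj.1 hj.2⟩

lemma measurable_count {mΩ : MeasurableSpace Ω} (hA : ∀ j ∈ s, MeasurableSet (A j)) :
    Measurable (count A s) := by
  classical
  have hcount : count A s = fun ω => ∑ j ∈ s, (A j).indicator (fun _ => (1 : ℕ)) ω := by
    funext ω
    simp only [count, Set.indicator_apply, Finset.card_filter]
  rw [hcount]
  exact Finset.measurable_sum _ fun j hj => measurable_const.indicator (hA j hj)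

lemma measurableSet_le_count {m : ι → MeasurableSpace Ω} {m' : MeasurableSpace Ω}
    (hm : ∀ j ∈ s, m j ≤ m') (hA : ∀ j ∈ s, MeasurableSet[m j] (A j)) (k : ℕ) :
    MeasurableSet[m'] {ω | k ≤ count A s ω} :=
  measurable_count (fun j hj => hm j hj _ (hA j hj)) measurableSet_Ici

lemma setOf_succ_le_count_insert [DecidableEq ι] (A : ι → Set Ω) (ha : a ∉ s) (k : ℕ) :
    {ω | k + 1 ≤ count A (insert a s) ω} =
      A a ∩ {ω | k ≤ count A s ω} ∪ (A a)ᶜ ∩ {ω | k + 1 ≤ count A s ω} := by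
  classical
  ext ω
  by_cases h : ω ∈ A a <;> simp [count_insert A ha, h]

lemma setOf_succ_le_count_insert_inter_subset [DecidableEq ι] (hAB : Disjoint (A a) (B a))
    (ha : a ∉ s) (k l : ℕ) :
    {ω | k + 1 ≤ count A (insert a s) ω} ∩ {ω | l + 1 ≤ count B (insert a s) ω} ⊆
      A a ∩ ({ω | k ≤ count A s ω} ∩ {ω | l + 1 ≤ count B s ω}) ∪
      B a ∩ ({ω | k + 1 ≤ count A s ω} ∩ {ω | l ≤ count B s ω}) ∪
      (A a ∪ B a)ᶜ ∩ ({ω | k + 1 ≤ count A s ω} ∩ {ω | l + 1 ≤ count B s ω}) := by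
  classical
  intro ω
  have hω : ω ∈ A a → ω ∉ B a := fun h => Set.disjoint_left.1 hAB h
  by_cases hωA : ω ∈ A a <;> by_cases hωB : ω ∈ B a <;>
    simp [count_insert A ha, count_insert B ha, hωA, hωB] at hω ⊢

variable {mΩ : MeasurableSpace Ω} {P : Measure Ω} {m : ι → MeasurableSpace Ω} {q : ℝ}

lemma measureReal_inter_of_indep {m₁ m₂ : MeasurableSpace Ω} (h : Indep m₁ m₂ P) {Q R : Set Ω}
    (hQ : MeasurableSet[m₁] Q) (hR : MeasurableSet[m₂] R) :
    P.real (Q ∩ R) = P.real Q * P.real R := by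
  simp only [Measure.real, (Indep_iff _ _ P).1 h Q R hQ hR, ENNReal.toReal_mul]

lemma indep_iSup_of_notMem (hm : ∀ j, m j ≤ mΩ) (hind : iIndep m P) (ha : a ∉ s) :
    Indep (m a) (⨆ j ∈ s, m j) P := by
  have h := indep_iSup_of_disjoint hm hind (S := {a}) (T := ↑s) (by simpa using ha)
  simpa only [Set.mem_singleton_iff, iSup_iSup_eq_left, Finset.mem_coe] using h

lemma iIndep_iSup_of_pairwise_disjoint {κ : Type*} {S : κ → Set ι} (hm : ∀ j, m j ≤ mΩ)
    (hind : iIndep m P) (hS : Pairwise (Function.onFun Disjoint S)) :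
    iIndep (fun k => ⨆ j ∈ S k, m j) P := by
  classical
  have := hind.isProbabilityMeasure
  refine (iIndep_iff _ _).2 fun T f hf => ?_
  induction T using Finset.induction_on with
  | empty => simp
  | insert b T hb ih =>
    have hdisj : Disjoint (S b) (⋃ c ∈ T, S c) :=
      Set.disjoint_iUnion₂_right.2 fun c hc => hS fun h => hb (h ▸ hc)
    have hT : MeasurableSet[⨆ j ∈ ⋃ c ∈ T, S c, m j] (⋂ c ∈ T, f c) :=
      Finset.measurableSet_biInter T fun c hc =>
        (biSup_mono fun _ hj => Set.mem_biUnion (s := ↑T) hc hj :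
          ⨆ j ∈ S c, m j ≤ ⨆ j ∈ ⋃ c ∈ T, S c, m j) _ (hf c (by simp [hc]))
    rw [Finset.set_biInter_insert, Finset.prod_insert hb,
      (Indep_iff _ _ P).1 (indep_iSup_of_disjoint hm hind hdisj) _ _ (hf b (by simp)) hT,
      ih fun c hc => hf c (by simp [hc])]

lemma measureReal_le_count (hm : ∀ j, m j ≤ mΩ) (hind : iIndep m P)
    (hA : ∀ j ∈ s, MeasurableSet[m j] (A j)) (hq : ∀ j ∈ s, P.real (A j) = q) (k : ℕ) :
    P.real {ω | k ≤ count A s ω} = binTail q s.card k := by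
  classical
  have := hind.isProbabilityMeasure
  induction s using Finset.induction_on generalizing k with
  | empty => cases k <;> simp [count_empty, binTail]
  | insert a s ha ih =>
    rw [Finset.forall_mem_insert] at hA hq
    cases k with
    | zero => simp [binTail_zero_right]
    | succ k =>
      have hcount : ∀ i, MeasurableSet[⨆ j ∈ s, m j] {ω | i ≤ count A s ω} :=
        measurableSet_le_count (fun j hj => le_iSup₂ (f := fun j _ => m j) j hj) hA.2
      have hAa := hm a _ hA.1
      have hindep := indep_iSup_of_notMem hm hind ha
      have hle : ⨆ j ∈ s, m j ≤ mΩ := iSup₂_le fun j _ => hm j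
      rw [setOf_succ_le_count_insert A ha, measureReal_union
          (disjoint_compl_right.mono inter_subset_left inter_subset_left)
          (hAa.compl.inter (hle _ (hcount _))),
        measureReal_inter_of_indep hindep hA.1 (hcount _),
        measureReal_inter_of_indep hindep hA.1.compl (hcount _), probReal_compl_eq_one_sub hAa,
        hq.1, ih hA.2 hq.2, ih hA.2 hq.2, Finset.card_insert_of_notMem ha, binTail_succ_succ,
        add_comm]

/-- The two sides differ by `q²` times the product of two consecutive differences of tails. -/
lemma add_add_mul_binTail_le (h0 : 0 ≤ q) (h1 : q ≤ 1) (N k l : ℕ) :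
    q * (binTail q N k * binTail q N (l + 1)) + q * (binTail q N (k + 1) * binTail q N l) +
        (1 - 2 * q) * (binTail q N (k + 1) * binTail q N (l + 1)) ≤
      binTail q (N + 1) (k + 1) * binTail q (N + 1) (l + 1) := by
  have hdiff := mul_nonneg (sq_nonneg q) (mul_nonneg
    (sub_nonneg.2 (antitone_binTail h0 h1 N k.le_succ))
    (sub_nonneg.2 (antitone_binTail h0 h1 N l.le_succ)))
  rw [binTail_succ_succ, binTail_succ_succ]
  linarith

lemma measureReal_succ_le_count_insert_inter_le [DecidableEq ι] (hm : ∀ j, m j ≤ mΩ)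
    (hind : iIndep m P) (ha : a ∉ s)
    (hA : ∀ j ∈ insert a s, MeasurableSet[m j] (A j)) (hqA : P.real (A a) = q)
    (hB : ∀ j ∈ insert a s, MeasurableSet[m j] (B j)) (hqB : P.real (B a) = q)
    (hAB : Disjoint (A a) (B a)) (k l : ℕ) :
    P.real ({ω | k + 1 ≤ count A (insert a s) ω} ∩ {ω | l + 1 ≤ count B (insert a s) ω}) ≤
      q * P.real ({ω | k ≤ count A s ω} ∩ {ω | l + 1 ≤ count B s ω}) +
        q * P.real ({ω | k + 1 ≤ count A s ω} ∩ {ω | l ≤ count B s ω}) +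
        (1 - 2 * q) * P.real ({ω | k + 1 ≤ count A s ω} ∩ {ω | l + 1 ≤ count B s ω}) := by
  have := hind.isProbabilityMeasure
  rw [Finset.forall_mem_insert] at hA hB
  have hle : ∀ j ∈ s, m j ≤ ⨆ j ∈ s, m j := fun j hj => le_iSup₂ (f := fun j _ => m j) j hj
  have hcounts : ∀ k l, MeasurableSet[⨆ j ∈ s, m j]
      ({ω | k ≤ count A s ω} ∩ {ω | l ≤ count B s ω}) := fun k l =>
    (measurableSet_le_count hle hA.2 k).inter (measurableSet_le_count hle hB.2 l)
  have hneither : P.real (A a ∪ B a)ᶜ = 1 - 2 * q := by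
    rw [probReal_compl_eq_one_sub ((hm a _ hA.1).union (hm a _ hB.1)),
      measureReal_union hAB (hm a _ hB.1), hqA, hqB, two_mul]
  have hindep := indep_iSup_of_notMem hm hind ha
  refine (measureReal_mono (setOf_succ_le_count_insert_inter_subset hAB ha k l)).trans <|
    (measureReal_union_le _ _).trans <|
    (add_le_add_left (measureReal_union_le _ _) _).trans (le_of_eq ?_)
  rw [measureReal_inter_of_indep hindep hA.1 (hcounts _ _),
    measureReal_inter_of_indep hindep hB.1 (hcounts _ _),
    measureReal_inter_of_indep hindep (hA.1.union hB.1).compl (hcounts _ _), hneither, hqA, hqB]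

/-- Counts of pairwise incompatible events are negatively correlated. -/
lemma measureReal_le_count_inter_le (h0 : 0 ≤ q) (h1 : q ≤ 1) (hm : ∀ j, m j ≤ mΩ)
    (hind : iIndep m P)
    (hA : ∀ j ∈ s, MeasurableSet[m j] (A j)) (hqA : ∀ j ∈ s, P.real (A j) = q)
    (hB : ∀ j ∈ s, MeasurableSet[m j] (B j)) (hqB : ∀ j ∈ s, P.real (B j) = q)
    (hAB : ∀ j ∈ s, Disjoint (A j) (B j)) (k l : ℕ) :
    P.real ({ω | k ≤ count A s ω} ∩ {ω | l ≤ count B s ω}) ≤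
      binTail q s.card k * binTail q s.card l := by
  classical
  have := hind.isProbabilityMeasure
  induction s using Finset.induction_on generalizing k l with
  | empty => cases k <;> cases l <;> simp [count_empty, binTail]
  | insert a s ha ih =>
    cases k with
    | zero =>
      rw [binTail_zero_right, one_mul, ← measureReal_le_count hm hind hB hqB]
      exact measureReal_mono Set.inter_subset_right
    | succ k =>
    cases l with
    | zero =>
      rw [binTail_zero_right, mul_one, ← measureReal_le_count hm hind hA hqA]
      exact measureReal_mono Set.inter_subset_left
    | succ l =>
      have hinsert := measureReal_succ_le_count_insert_inter_le hm hind ha hA (hqA a (by simp)) hB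
        (hqB a (by simp)) (hAB a (by simp)) k l
      rw [Finset.forall_mem_insert] at hA hqA hB hqB hAB
      have ih := ih hA.2 hqA.2 hB.2 hqB.2 hAB.2
      have hneither : 0 ≤ 1 - 2 * q := by
        have hle := measureReal_le_one (μ := P) (s := A a ∪ B a)
        rw [measureReal_union hAB.1 (hm a _ hB.1), hqA.1, hqB.1] at hle
        linarith
      rw [Finset.card_insert_of_notMem ha]
      refine (hinsert.trans ?_).trans (add_add_mul_binTail_le h0 h1 s.card k l)
      gcongr <;> apply ih

variable [IsProbabilityMeasure P] {p c : ℝ}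

lemma covariance_indicator_one {Q R : Set Ω} (hQ : MeasurableSet Q) (hR : MeasurableSet R) :
    covariance (Q.indicator 1) (R.indicator 1) P = P.real (Q ∩ R) - P.real Q * P.real R := by
  have hmem : ∀ {T : Set Ω}, MeasurableSet T → MemLp (T.indicator (1 : Ω → ℝ)) 2 P :=
    fun hT => (memLp_const (1 : ℝ)).indicator hT
  rw [covariance_eq_sub (hmem hQ) (hmem hR), integral_indicator_one hQ,
    integral_indicator_one hR, ← integral_indicator_one (hQ.inter hR), Set.inter_indicator_one]

lemma variance_sum_indicator_le (hA : ∀ i ∈ s, MeasurableSet (A i))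
    (hAp : ∀ i ∈ s, P.real (A i) = p) (hp : 0 ≤ p) (hc : 0 ≤ c)
    (hAA : ∀ i ∈ s, ∀ j ∈ s, i ≠ j → P.real (A i ∩ A j) ≤ c * p + p ^ 2) :
    variance (∑ i ∈ s, (A i).indicator (1 : Ω → ℝ)) P ≤ s.card * p + s.card ^ 2 * (c * p) := by
  classical
  have hcov : ∀ i ∈ s, ∀ j ∈ s, covariance ((A i).indicator 1) ((A j).indicator 1) P ≤
      (if i = j then p else 0) + c * p := by
    intro i hi j hj
    rw [covariance_indicator_one (hA i hi) (hA j hj), hAp i hi, hAp j hj]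
    split_ifs with hij
    · rw [← hij, Set.inter_self, hAp i hi]
      nlinarith [mul_nonneg hc hp]
    · linarith [hAA i hi j hj hij]
  rw [variance_sum' (X := fun i => (A i).indicator 1) fun i hi =>
    (memLp_const (1 : ℝ)).indicator (hA i hi)]
  calc ∑ i ∈ s, ∑ j ∈ s, covariance ((A i).indicator 1) ((A j).indicator 1) P
      ≤ ∑ i ∈ s, ∑ j ∈ s, ((if i = j then p else 0) + c * p) :=
        Finset.sum_le_sum fun i hi => Finset.sum_le_sum fun j hj => hcov i hi j hj
    _ = ∑ _i ∈ s, (p + s.card * (c * p)) := Finset.sum_congr rfl fun _ hi => by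
        rw [Finset.sum_add_distrib, Finset.sum_ite_eq, if_pos hi, Finset.sum_const, nsmul_eq_mul]
    _ = s.card * p + s.card ^ 2 * (c * p) := by
        rw [Finset.sum_const, nsmul_eq_mul]
        ring

lemma measureReal_forall_notMem_le (hs : s.Nonempty) (hp : 0 < p) (hc : 0 ≤ c)
    (hA : ∀ i ∈ s, MeasurableSet (A i)) (hAp : ∀ i ∈ s, P.real (A i) = p)
    (hAA : ∀ i ∈ s, ∀ j ∈ s, i ≠ j → P.real (A i ∩ A j) ≤ c * p + p ^ 2) :
    P.real {ω | ∀ i ∈ s, ω ∉ A i} ≤ 1 / (s.card * p) + c / p := by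
  have hcard : (0 : ℝ) < s.card := by exact_mod_cast hs.card_pos
  set W : Ω → ℝ := ∑ i ∈ s, (A i).indicator (1 : Ω → ℝ) with hW
  have hmem : ∀ i ∈ s, MemLp ((A i).indicator (1 : Ω → ℝ)) 2 P := fun i hi =>
    (memLp_const (1 : ℝ)).indicator (hA i hi)
  have hmean : ∫ ω, W ω ∂P = s.card * p := by
    simp only [hW, Finset.sum_apply]
    rw [integral_finsetSum _ fun i hi => (hmem i hi).integrable one_le_two,
      Finset.sum_congr rfl fun i hi => (integral_indicator_one (hA i hi)).trans (hAp i hi),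
      Finset.sum_const, nsmul_eq_mul]
  have hsubset : {ω | ∀ i ∈ s, ω ∉ A i} ⊆ {ω | s.card * p ≤ |W ω - ∫ ω, W ω ∂P|} := by
    intro ω hω
    have hWω : W ω = 0 := by
      rw [hW, Finset.sum_apply]
      exact Finset.sum_eq_zero fun i hi => Set.indicator_of_notMem (hω i hi) _
    rw [Set.mem_ofPred_eq, hmean, hWω, zero_sub, abs_neg]
    exact le_abs_self _
  have hchebyshev := measure_mono hsubset |>.trans
    (meas_ge_le_variance_div_sq (memLp_finsetSum' s hmem) (mul_pos hcard hp))
  calc P.real {ω | ∀ i ∈ s, ω ∉ A i} ≤ variance W P / (s.card * p) ^ 2 :=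
        ENNReal.toReal_le_of_le_ofReal (div_nonneg (variance_nonneg _ _) (sq_nonneg _)) hchebyshev
    _ ≤ (s.card * p + s.card ^ 2 * (c * p)) / (s.card * p) ^ 2 := by
        gcongr
        exact variance_sum_indicator_le hA hAp hp.le hc hAA
    _ = 1 / (s.card * p) + c / p := by field_simp

end Count

/-! ### Independence of the variables attached to distinct neighbours -/

section Independence

variable {Ω : Type*} {mΩ : MeasurableSpace Ω} {P : Measure Ω}

lemma iIndep_sumElim {ι κ : Type*} {m₁ : ι → MeasurableSpace Ω} {m₂ : κ → MeasurableSpace Ω}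
    {F G : MeasurableSpace Ω} (h₁ : iIndep m₁ P) (h₂ : iIndep m₂ P) (hF : ∀ i, m₁ i ≤ F)
    (hG : ∀ k, m₂ k ≤ G) (hFG : Indep F G P) : iIndep (Sum.elim m₁ m₂) P := by
  refine (iIndep_iff _ _).2 fun s f hf => ?_
  have hl : ∀ i ∈ s.toLeft, MeasurableSet[m₁ i] (f (Sum.inl i)) := fun i hi =>
    hf _ (Finset.mem_toLeft.1 hi)
  have hr : ∀ k ∈ s.toRight, MeasurableSet[m₂ k] (f (Sum.inr k)) := fun k hk =>
    hf _ (Finset.mem_toRight.1 hk)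
  have hinter : ⋂ x ∈ s, f x =
      (⋂ i ∈ s.toLeft, f (Sum.inl i)) ∩ ⋂ k ∈ s.toRight, f (Sum.inr k) := by
    ext ω
    simp
  rw [hinter, (Indep_iff _ _ P).1 hFG _ _
      (Finset.measurableSet_biInter _ fun i hi => hF i _ (hl i hi))
      (Finset.measurableSet_biInter _ fun k hk => hG k _ (hr k hk)),
    h₁.meas_biInter hl, h₂.meas_biInter hr]
  conv_rhs => rw [← Finset.toLeft_disjSum_toRight (u := s), Finset.prod_disjSum]

lemma measure_mem_eq_lintegral_of_indepFun {β γ : Type*} {mβ : MeasurableSpace β}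
    {mγ : MeasurableSpace γ} [IsProbabilityMeasure P] {V : Ω → β} {Z : Ω → γ} (hV : Measurable V)
    (hZ : Measurable Z) (h : IndepFun V Z P) {R : Set (β × γ)} (hR : MeasurableSet R) :
    P {ω | (V ω, Z ω) ∈ R} = ∫⁻ v, P {ω | (v, Z ω) ∈ R} ∂(P.map V) := by
  have := Measure.isProbabilityMeasure_map (μ := P) hZ.aemeasurable
  calc P {ω | (V ω, Z ω) ∈ R} = P.map (fun ω => (V ω, Z ω)) R :=
        (Measure.map_apply (hV.prodMk hZ) hR).symm
    _ = ∫⁻ v, P.map Z (Prod.mk v ⁻¹' R) ∂(P.map V) := by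
        rw [(indepFun_iff_map_prod_eq_prod_map_map hV.aemeasurable hZ.aemeasurable).1 h,
          Measure.prod_apply hR]
    _ = ∫⁻ v, P {ω | (v, Z ω) ∈ R} ∂(P.map V) :=
        lintegral_congr fun v => Measure.map_apply hZ (measurable_prodMk_left hR)

lemma measure_mem_eq_lintegral_of_indep {Ω β : Type*} {m₁ m₂ mΩ : MeasurableSpace Ω}
    {mβ : MeasurableSpace β} {P : Measure Ω} [IsProbabilityMeasure P] {V : Ω → β} (hm₁ : m₁ ≤ mΩ)
    (hm₂ : m₂ ≤ mΩ) (h : Indep m₁ m₂ P) (hV : Measurable[m₁] V) {R : Set (β × Ω)}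
    (hR : MeasurableSet[mβ.prod m₂] R) :
    P {ω | (V ω, ω) ∈ R} = ∫⁻ v, P {ω | (v, ω) ∈ R} ∂(P.map V) :=
  measure_mem_eq_lintegral_of_indepFun (mγ := m₂) (Z := id) (hV.mono hm₁ le_rfl)
    (measurable_id'' hm₂)
    ((IndepFun_iff_Indep (mγ := m₂) _ _ _).2
      (indep_of_indep_of_le h hV.comap_le MeasurableSpace.comap_id.le)) hR

end Independence

section Stars

variable {Ω : Type*} {mΩ : MeasurableSpace Ω} {P : Measure Ω} (M : Model d P) {C : Set ℕ}
  {i j : ℕ}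

/-- The edge variable of the unordered pair `{i, j}`. -/
def edgeVar (i j : ℕ) (ω : Ω) : ℝ := M.U (min i j) (max i j) ω

lemma measurable_edgeVar (i j : ℕ) : Measurable (edgeVar M i j) := M.U_meas _ _

/-- The index set of the independent sources of randomness of a model: the positions of the
vertices and the edge variables. -/
abbrev SourceIndex : Type := {i : ℕ // 1 ≤ i} ⊕ {p : ℕ × ℕ // 1 ≤ p.1 ∧ p.1 < p.2}

/-- The σ-algebras generated by the individual sources of randomness. -/
abbrev sourceSigma : SourceIndex → MeasurableSpace Ω :=
  Sum.elim (fun i => MeasurableSpace.comap (M.X i) inferInstance)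
    (fun p => MeasurableSpace.comap (M.U p.1.1 p.1.2) inferInstance)

lemma sourceSigma_le (k : SourceIndex) : sourceSigma M k ≤ mΩ := by
  rcases k with i | p
  · exact (M.X_meas i).comap_le
  · exact (M.U_meas _ _).comap_le

lemma iIndep_sourceSigma : iIndep (sourceSigma M) P := by
  refine iIndep_sumElim M.X_indep M.U_indep (fun i => ?_) (fun p => ?_)
    (M.families_indep.indep (i := 0) (j := 2) (by decide)) <;>
    refine Measurable.comap_le ?_
  · exact (measurable_pi_apply i.1).comp (comap_measurable fun ω (i : ℕ) => M.X i ω)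
  · exact (measurable_pi_apply p.1).comp (comap_measurable fun ω (p : ℕ × ℕ) => M.U p.1 p.2 ω)

/-- The source of the edge variable of `{i, j}`. -/
def edgeIndex (hi : 1 ≤ i) (hj : 1 ≤ j) (hij : i ≠ j) : {p : ℕ × ℕ // 1 ≤ p.1 ∧ p.1 < p.2} :=
  ⟨(min i j, max i j), by simp only; omega⟩

lemma indepFun_X_edgeVar (hi : 1 ≤ i) (hj : 1 ≤ j) (hij : i ≠ j) :
    IndepFun (M.X j) (edgeVar M i j) P :=
  (IndepFun_iff_Indep _ _ _).2 <| (iIndep_sourceSigma M).indep (i := Sum.inl ⟨j, hj⟩)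
    (j := Sum.inr (edgeIndex hi hj hij)) Sum.inl_ne_inr

lemma indepFun_X_X (hi : 1 ≤ i) (hj : 1 ≤ j) (hij : i ≠ j) : IndepFun (M.X i) (M.X j) P :=
  M.X_indep.indepFun (i := ⟨i, hi⟩) (j := ⟨j, hj⟩) (by simpa using hij)

lemma map_edgeVar (hi : 1 ≤ i) (hj : 1 ≤ j) (hij : i ≠ j) :
    P.map (edgeVar M i j) = volume.restrict (Set.Icc (0 : ℝ) 1) :=
  M.U_unif _ _ (edgeIndex hi hj hij).2.1 (edgeIndex hi hj hij).2.2

/-- The sources of the positions of the vertices in `C`. -/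
def centreIndex (C : Set ℕ) : Set SourceIndex := Sum.inl '' {a | a.1 ∈ C}

/-- The sources describing the vertex `j ∉ C` as a possible neighbour of the vertices in `C`: its
position and the edge variables joining it to `C`. It is empty for `j ∈ C`. -/
def starIndex (C : Set ℕ) (j : ℕ) : Set SourceIndex :=
  {k | j ∉ C ∧ Sum.elim (fun a => a.1 = j) (fun p => ∃ c ∈ C, p.1 = (min c j, max c j)) k}

lemma pairwise_disjoint_starIndex (C : Set ℕ) :
    Pairwise (Function.onFun Disjoint (starIndex C)) := by
  refine fun j l hjl => Set.disjoint_left.2 ?_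
  rintro (a | p) ⟨_, hj⟩ ⟨hlC, hl⟩
  · exact hjl ((show a.1 = j from hj).symm.trans hl)
  · obtain ⟨c, hc, hcj⟩ := hj
    obtain ⟨c', _, hcl⟩ := hl
    have hlc : l ≠ c := fun h => hlC (h ▸ hc)
    simp only [Prod.ext_iff] at hcj hcl
    omega

lemma disjoint_centreIndex_iUnion_starIndex (C : Set ℕ) :
    Disjoint (centreIndex C) (⋃ j, starIndex C j) := by
  refine Set.disjoint_iUnion_right.2 fun j => Set.disjoint_left.2 ?_
  rintro _ ⟨a, ha, rfl⟩ ⟨hj, haj⟩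
  exact hj ((show a.1 = j from haj) ▸ ha)

/-- The σ-algebra generated by the positions of the vertices in `C`. -/
abbrev centreSigma (C : Set ℕ) : MeasurableSpace Ω := ⨆ k ∈ centreIndex C, sourceSigma M k

/-- The σ-algebra generated by the sources in `starIndex C j`. -/
abbrev starSigma (C : Set ℕ) (j : ℕ) : MeasurableSpace Ω := ⨆ k ∈ starIndex C j, sourceSigma M k

lemma centreSigma_le (C : Set ℕ) : centreSigma M C ≤ mΩ := iSup₂_le fun k _ => sourceSigma_le M k

lemma starSigma_le (C : Set ℕ) (j : ℕ) : starSigma M C j ≤ mΩ :=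
  iSup₂_le fun k _ => sourceSigma_le M k

lemma iIndep_starSigma (C : Set ℕ) : iIndep (starSigma M C) P :=
  iIndep_iSup_of_pairwise_disjoint (sourceSigma_le M) (iIndep_sourceSigma M)
    (pairwise_disjoint_starIndex C)

lemma indep_centreSigma_iSup_starSigma (C : Set ℕ) :
    Indep (centreSigma M C) (⨆ j, starSigma M C j) P := by
  have h := indep_iSup_of_disjoint (sourceSigma_le M) (iIndep_sourceSigma M)
    (disjoint_centreIndex_iUnion_starIndex C)
  rwa [iSup_iUnion] at h

lemma measurable_X_centreSigma (hi : 1 ≤ i) (hiC : i ∈ C) : Measurable[centreSigma M C] (M.X i) :=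
  measurable_iff_comap_le.2 <| le_iSup₂ (f := fun k (_ : k ∈ centreIndex C) => sourceSigma M k)
    (Sum.inl ⟨i, hi⟩) ⟨⟨i, hi⟩, hiC, rfl⟩

lemma measurable_X_starSigma (hj : 1 ≤ j) (hjC : j ∉ C) : Measurable[starSigma M C j] (M.X j) :=
  measurable_iff_comap_le.2 <| le_iSup₂ (f := fun k (_ : k ∈ starIndex C j) => sourceSigma M k)
    (Sum.inl ⟨j, hj⟩) ⟨hjC, rfl⟩

lemma measurable_edgeVar_starSigma (hi : 1 ≤ i) (hiC : i ∈ C) (hj : 1 ≤ j) (hjC : j ∉ C) :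
    Measurable[starSigma M C j] (edgeVar M i j) :=
  measurable_iff_comap_le.2 <| le_iSup₂ (f := fun k (_ : k ∈ starIndex C j) => sourceSigma M k)
    (Sum.inr (edgeIndex hi hj fun h => hjC (h ▸ hiC))) ⟨hjC, i, hiC, rfl⟩

end Stars

/-! ### The number of edges at one and at two vertices -/

section Links

variable {Ω : Type*} {mΩ : MeasurableSpace Ω} {P : Measure Ω} (M : Model d P) {r ρ : ℝ}
  {B : Set ℝ} {C : Set ℕ} {J : Finset ℕ} {i i' j : ℕ}

/-- The connection function extended to the whole line as a non-increasing function. -/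
def gExt (t : ℝ) : ℝ := M.g (max t 0)

lemma gExt_of_nonneg {t : ℝ} (ht : 0 ≤ t) : gExt M t = M.g t := by rw [gExt, max_eq_left ht]

lemma antitone_gExt : Antitone (gExt M) := fun _ _ hst =>
  M.g_antitone (mem_Ici.2 (le_max_right _ _)) (mem_Ici.2 (le_max_right _ _))
    (max_le_max hst le_rfl)

lemma gExt_le_one (t : ℝ) : gExt M t ≤ 1 := (M.g_mem _ (le_max_right _ _)).2

/-- The triples (position, position, edge variable) for which there is an edge at scale `r` whose
length belongs to `B`. -/
def linked (r : ℝ) (B : Set ℝ) :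
    Set (EuclideanSpace ℝ (Fin d) × EuclideanSpace ℝ (Fin d) × ℝ) :=
  {p | p.2.2 ≤ gExt M (torusDist p.1 p.2.1 / r) ∧ torusDist p.1 p.2.1 ∈ B}

/-- The event that `i` and `j` are joined at scale `r` by an edge of length in `B`. -/
def linkEvent (r : ℝ) (B : Set ℝ) (i j : ℕ) : Set Ω :=
  {ω | (M.X i ω, M.X j ω, edgeVar M i j ω) ∈ linked M r B}

/-- The event `linkEvent M r B i j` with the position of `i` replaced by the constant `x`. -/
def linkEventFrom (r : ℝ) (B : Set ℝ) (i : ℕ) (x : EuclideanSpace ℝ (Fin d)) (j : ℕ) : Set Ω :=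
  {ω | (x, M.X j ω, edgeVar M i j ω) ∈ linked M r B}

lemma mem_linkEvent {ω : Ω} :
    ω ∈ linkEvent M r B i j ↔ ω ∈ linkEventFrom M r B i (M.X i ω) j := by
  simp only [linkEvent, linkEventFrom, Set.mem_ofPred_eq]

lemma count_linkEvent (i : ℕ) (J : Finset ℕ) (ω : Ω) :
    count (linkEvent M r B i) J ω = count (linkEventFrom M r B i (M.X i ω)) J ω :=
  le_antisymm (count_mono subset_rfl fun _ _ => (mem_linkEvent M).1)
    (count_mono subset_rfl fun _ _ => (mem_linkEvent M).2)

/-- The probability that two given vertices are joined at scale `r` by an edge of length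
in `B`. -/
def edgeProb (r : ℝ) (B : Set ℝ) : ℝ :=
  (∫⁻ y in cube d, B.indicator (fun s => ENNReal.ofReal (gExt M (s / r))) ‖y‖).toReal

lemma measurableSet_linked (hB : MeasurableSet B) : MeasurableSet (linked M r B) := by
  have hdist : Measurable fun p : EuclideanSpace ℝ (Fin d) × EuclideanSpace ℝ (Fin d) × ℝ =>
      torusDist p.1 p.2.1 :=
    measurable_torusDist measurable_fst (measurable_fst.comp measurable_snd)
  exact (measurableSet_le (measurable_snd.comp measurable_snd)
    ((antitone_gExt M).measurable.comp (hdist.div_const r))).inter (hdist hB)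

lemma measurableSet_linkEvent (hB : MeasurableSet B) (i j : ℕ) :
    MeasurableSet (linkEvent M r B i j) :=
  ((M.X_meas i).prodMk ((M.X_meas j).prodMk (measurable_edgeVar M i j)))
    (measurableSet_linked M hB)

lemma measurableSet_linkEventFrom (hi : 1 ≤ i) (hiC : i ∈ C) (hB : MeasurableSet B)
    (hJ : ∀ j ∈ J, 1 ≤ j ∧ j ∉ C) (x : EuclideanSpace ℝ (Fin d)) :
    ∀ j ∈ J, MeasurableSet[starSigma M C j] (linkEventFrom M r B i x j) := fun j hj =>
  ((measurable_X_starSigma M (hJ j hj).1 (hJ j hj).2).prodMk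
    (measurable_edgeVar_starSigma M hi hiC (hJ j hj).1 (hJ j hj).2))
    (measurable_prodMk_left (measurableSet_linked M hB))

lemma measurableSet_le_count_linkEventFrom {β : Type*} {mβ : MeasurableSpace β}
    {f : β → EuclideanSpace ℝ (Fin d)} (hf : Measurable f) (hi : 1 ≤ i) (hiC : i ∈ C)
    (hB : MeasurableSet B) (hJ : ∀ j ∈ J, 1 ≤ j ∧ j ∉ C) (k : ℕ) :
    MeasurableSet[mβ.prod (⨆ j, starSigma M C j)]
      {p : β × Ω | k ≤ count (linkEventFrom M r B i (f p.1)) J p.2} := by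
  have hlink : ∀ j ∈ J, MeasurableSet[mβ.prod (⨆ j, starSigma M C j)]
      {p : β × Ω | (f p.1, M.X j p.2, edgeVar M i j p.2) ∈ linked M r B} := by
    intro j hj
    have hle := le_iSup (starSigma M C) j
    have hX := (measurable_X_starSigma M (hJ j hj).1 (hJ j hj).2).mono hle le_rfl
    have hU := (measurable_edgeVar_starSigma M hi hiC (hJ j hj).1 (hJ j hj).2).mono hle le_rfl
    let _ : MeasurableSpace Ω := ⨆ j, starSigma M C j
    exact ((hf.comp measurable_fst).prodMk ((hX.comp measurable_snd).prodMk
      (hU.comp measurable_snd))) (measurableSet_linked M hB)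
  exact measurable_count (mΩ := mβ.prod (⨆ j, starSigma M C j)) hlink measurableSet_Ici

lemma measure_edgeVar_le (hi : 1 ≤ i) (hj : 1 ≤ j) (hij : i ≠ j) {a : ℝ} (ha : a ≤ 1) :
    P {ω | edgeVar M i j ω ≤ a} = ENNReal.ofReal a := by
  have hIcc : Iic a ∩ Icc 0 1 = Icc 0 a := by
    rw [← Ici_inter_Iic, inter_left_comm, Iic_inter_Iic, min_eq_left ha, Ici_inter_Iic]
  calc P {ω | edgeVar M i j ω ≤ a} = P.map (edgeVar M i j) (Iic a) :=
        (Measure.map_apply (measurable_edgeVar M i j) measurableSet_Iic).symm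
    _ = ENNReal.ofReal a := by
        rw [map_edgeVar M hi hj hij, Measure.restrict_apply measurableSet_Iic, hIcc,
          Real.volume_Icc, sub_zero]

lemma edgeProb_nonneg : 0 ≤ edgeProb M r B := ENNReal.toReal_nonneg

variable [IsProbabilityMeasure P]

lemma measureReal_linkEventFrom (hi : 1 ≤ i) (hj : 1 ≤ j) (hij : i ≠ j) (hB : MeasurableSet B)
    (x : EuclideanSpace ℝ (Fin d)) : P.real (linkEventFrom M r B i x j) = edgeProb M r B := by
  have hF : Measurable (B.indicator fun s => ENNReal.ofReal (gExt M (s / r))) :=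
    (ENNReal.measurable_ofReal.comp
      ((antitone_gExt M).measurable.comp (measurable_id.div_const r))).indicator hB
  rw [Measure.real, edgeProb, ← lintegral_cube_torusDist x hF, ← M.X_unif j hj]
  congr 1
  refine (measure_mem_eq_lintegral_of_indepFun (M.X_meas j) (measurable_edgeVar M i j)
    (indepFun_X_edgeVar M hi hj hij) (R := {p | (x, p) ∈ linked M r B})
    (measurable_prodMk_left (measurableSet_linked M hB))).trans (lintegral_congr fun y => ?_)
  by_cases hy : torusDist x y ∈ B
  · simp only [linked, Set.mem_ofPred_eq, hy, and_true, Set.indicator_of_mem]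
    exact measure_edgeVar_le M hi hj hij (gExt_le_one M _)
  · simp [linked, hy]

lemma edgeProb_le_one (hB : MeasurableSet B) : edgeProb M r B ≤ 1 :=
  measureReal_linkEventFrom M (r := r) le_rfl one_le_two (Nat.succ_ne_self 1).symm hB 0 ▸
    measureReal_le_one

lemma measureReal_linkEventFrom_star (hi : 1 ≤ i) (hiC : i ∈ C) (hB : MeasurableSet B)
    (hJ : ∀ j ∈ J, 1 ≤ j ∧ j ∉ C) (x : EuclideanSpace ℝ (Fin d)) :
    ∀ j ∈ J, P.real (linkEventFrom M r B i x j) = edgeProb M r B := fun j hj =>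
  measureReal_linkEventFrom M hi (hJ j hj).1 (fun h => (hJ j hj).2 (h ▸ hiC)) hB x

lemma measureReal_le_count_linkEventFrom (hi : 1 ≤ i) (hiC : i ∈ C) (hB : MeasurableSet B)
    (hJ : ∀ j ∈ J, 1 ≤ j ∧ j ∉ C) (x : EuclideanSpace ℝ (Fin d)) (k : ℕ) :
    P.real {ω | k ≤ count (linkEventFrom M r B i x) J ω} = binTail (edgeProb M r B) J.card k :=
  measureReal_le_count (starSigma_le M C) (iIndep_starSigma M C)
    (measurableSet_linkEventFrom M hi hiC hB hJ x)
    (measureReal_linkEventFrom_star M hi hiC hB hJ x) k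

lemma measureReal_le_count_linkEvent (hi : 1 ≤ i) (hJ : ∀ j ∈ J, 1 ≤ j ∧ j ≠ i)
    (hB : MeasurableSet B) (k : ℕ) :
    P.real {ω | k ≤ count (linkEvent M r B i) J ω} = binTail (edgeProb M r B) J.card k := by
  have := Measure.isProbabilityMeasure_map (μ := P) (M.X_meas i).aemeasurable
  have hcond : P {ω | k ≤ count (linkEvent M r B i) J ω} =
      ∫⁻ x, P {ω | k ≤ count (linkEventFrom M r B i x) J ω} ∂(P.map (M.X i)) := by
    simp only [count_linkEvent]
    exact measure_mem_eq_lintegral_of_indep (centreSigma_le M {i}) (iSup_le (starSigma_le M {i}))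
      (indep_centreSigma_iSup_starSigma M {i}) (measurable_X_centreSigma M hi (Set.mem_singleton i))
      (R := {p | k ≤ count (linkEventFrom M r B i p.1) J p.2})
      (measurableSet_le_count_linkEventFrom M measurable_id hi (Set.mem_singleton i) hB hJ k)
  have hconst : ∀ x, P {ω | k ≤ count (linkEventFrom M r B i x) J ω} =
      ENNReal.ofReal (binTail (edgeProb M r B) J.card k) := fun x => by
    rw [← measureReal_le_count_linkEventFrom M hi (Set.mem_singleton i) hB hJ x k,
      ofReal_measureReal]
  rw [Measure.real, hcond, lintegral_congr hconst, lintegral_const, measure_univ, mul_one,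
    ENNReal.toReal_ofReal]
  exact measureReal_le_count_linkEventFrom M hi (Set.mem_singleton i) hB hJ 0 k ▸
    measureReal_nonneg

lemma measure_torusDist_le (hi : 1 ≤ i) (hi' : 1 ≤ i') (hii : i ≠ i') (ρ : ℝ) :
    P {ω | torusDist (M.X i ω) (M.X i' ω) ≤ ρ} ≤
      volume (Metric.closedBall (0 : EuclideanSpace ℝ (Fin d)) ρ) := by
  have := Measure.isProbabilityMeasure_map (μ := P) (M.X_meas i).aemeasurable
  calc P {ω | torusDist (M.X i ω) (M.X i' ω) ≤ ρ}
      = ∫⁻ x, P {ω | torusDist x (M.X i' ω) ≤ ρ} ∂(P.map (M.X i)) :=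
        measure_mem_eq_lintegral_of_indepFun (M.X_meas i) (M.X_meas i')
          (indepFun_X_X M hi hi' hii) (R := {p | torusDist p.1 p.2 ≤ ρ})
          (measurable_torusDist measurable_fst measurable_snd measurableSet_Iic)
    _ = ∫⁻ x, P.map (M.X i') {y | torusDist x y ≤ ρ} ∂(P.map (M.X i)) :=
        lintegral_congr fun x => (Measure.map_apply (M.X_meas i')
          (measurable_torusDist measurable_const measurable_id measurableSet_Iic)).symm
    _ ≤ ∫⁻ _, volume (Metric.closedBall (0 : EuclideanSpace ℝ (Fin d)) ρ) ∂(P.map (M.X i)) := by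
        rw [M.X_unif i' hi']
        exact lintegral_mono fun x => volume_cube_torusDist_le x ρ
    _ = volume (Metric.closedBall (0 : EuclideanSpace ℝ (Fin d)) ρ) := by
        rw [lintegral_const, measure_univ, mul_one]

/-- Short edges from two distant centres to the same vertex exclude each other. -/
lemma measureReal_inter_le_of_lt_torusDist (hi : 1 ≤ i) (hiC : i ∈ C) (hi' : 1 ≤ i')
    (hiC' : i' ∈ C) (hJ : ∀ j ∈ J, 1 ≤ j ∧ j ∉ C) {x x' : EuclideanSpace ℝ (Fin d)}
    (hx : 2 * ρ < torusDist x x') (k : ℕ) :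
    P.real ({ω | k ≤ count (linkEventFrom M r (Iic ρ) i x) J ω} ∩
        {ω | k ≤ count (linkEventFrom M r (Iic ρ) i' x') J ω}) ≤
      binTail (edgeProb M r (Iic ρ)) J.card k ^ 2 := by
  have hdisj : ∀ j ∈ J,
      Disjoint (linkEventFrom M r (Iic ρ) i x j) (linkEventFrom M r (Iic ρ) i' x' j) :=
    fun j _ => Set.disjoint_left.2 fun ω hω hω' => by
      have hle : torusDist x (M.X j ω) ≤ ρ := hω.2
      have hle' : torusDist x' (M.X j ω) ≤ ρ := hω'.2
      linarith [torusDist_le_add x x' (M.X j ω)]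
  have hB : MeasurableSet (Iic ρ) := measurableSet_Iic
  rw [sq]
  exact measureReal_le_count_inter_le (edgeProb_nonneg M) (edgeProb_le_one M hB)
    (starSigma_le M C) (iIndep_starSigma M C) (measurableSet_linkEventFrom M hi hiC hB hJ x)
    (measureReal_linkEventFrom_star M hi hiC hB hJ x)
    (measurableSet_linkEventFrom M hi' hiC' hB hJ x')
    (measureReal_linkEventFrom_star M hi' hiC' hB hJ x') hdisj k k

lemma measure_inter_le_indicator_add (hi : 1 ≤ i) (hiC : i ∈ C) (hi' : 1 ≤ i') (hiC' : i' ∈ C)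
    (hJ : ∀ j ∈ J, 1 ≤ j ∧ j ∉ C) (k : ℕ)
    (v : EuclideanSpace ℝ (Fin d) × EuclideanSpace ℝ (Fin d)) :
    P ({ω | k ≤ count (linkEventFrom M r (Iic ρ) i v.1) J ω} ∩
        {ω | k ≤ count (linkEventFrom M r (Iic ρ) i' v.2) J ω}) ≤
      {v | torusDist v.1 v.2 ≤ 2 * ρ}.indicator
        (fun _ => ENNReal.ofReal (binTail (edgeProb M r (Iic ρ)) J.card k)) v +
      ENNReal.ofReal (binTail (edgeProb M r (Iic ρ)) J.card k ^ 2) := by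
  by_cases hv : torusDist v.1 v.2 ≤ 2 * ρ
  · rw [Set.indicator_of_mem (show v ∈ {v | torusDist v.1 v.2 ≤ 2 * ρ} from hv)]
    refine (measure_mono inter_subset_left).trans (le_add_right (le_of_eq ?_))
    rw [← measureReal_le_count_linkEventFrom M hi hiC measurableSet_Iic hJ v.1 k,
      ofReal_measureReal]
  · rw [Set.indicator_of_notMem (show v ∉ {v | torusDist v.1 v.2 ≤ 2 * ρ} from hv), zero_add,
      ← ofReal_measureReal]
    exact ENNReal.ofReal_le_ofReal
      (measureReal_inter_le_of_lt_torusDist M hi hiC hi' hiC' hJ (not_le.1 hv) k)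

lemma measure_le_count_linkEvent_inter_le (hi : 1 ≤ i) (hi' : 1 ≤ i') (hii : i ≠ i')
    (hJ : ∀ j ∈ J, 1 ≤ j ∧ j ∉ ({i, i'} : Set ℕ)) (k : ℕ) :
    P ({ω | k ≤ count (linkEvent M r (Iic ρ) i) J ω} ∩
        {ω | k ≤ count (linkEvent M r (Iic ρ) i') J ω}) ≤
      ENNReal.ofReal (binTail (edgeProb M r (Iic ρ)) J.card k) *
        volume (Metric.closedBall (0 : EuclideanSpace ℝ (Fin d)) (2 * ρ)) +
      ENNReal.ofReal (binTail (edgeProb M r (Iic ρ)) J.card k ^ 2) := by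
  have hiC : i ∈ ({i, i'} : Set ℕ) := Set.mem_insert i {i'}
  have hiC' : i' ∈ ({i, i'} : Set ℕ) := Set.mem_insert_of_mem i rfl
  have hV := (M.X_meas i).prodMk (M.X_meas i')
  have := Measure.isProbabilityMeasure_map (μ := P) hV.aemeasurable
  have hclose : MeasurableSet
      {v : EuclideanSpace ℝ (Fin d) × EuclideanSpace ℝ (Fin d) | torusDist v.1 v.2 ≤ 2 * ρ} :=
    measurable_torusDist measurable_fst measurable_snd measurableSet_Iic
  have hcond : P ({ω | k ≤ count (linkEvent M r (Iic ρ) i) J ω} ∩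
        {ω | k ≤ count (linkEvent M r (Iic ρ) i') J ω}) =
      ∫⁻ v, P ({ω | k ≤ count (linkEventFrom M r (Iic ρ) i v.1) J ω} ∩
        {ω | k ≤ count (linkEventFrom M r (Iic ρ) i' v.2) J ω})
        ∂(P.map fun ω => (M.X i ω, M.X i' ω)) := by
    simp only [count_linkEvent]
    exact measure_mem_eq_lintegral_of_indep (centreSigma_le M _) (iSup_le (starSigma_le M _))
      (indep_centreSigma_iSup_starSigma M {i, i'})
      ((measurable_X_centreSigma M hi hiC).prodMk (measurable_X_centreSigma M hi' hiC'))
      (R := {p | k ≤ count (linkEventFrom M r (Iic ρ) i p.1.1) J p.2} ∩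
        {p | k ≤ count (linkEventFrom M r (Iic ρ) i' p.1.2) J p.2})
      ((measurableSet_le_count_linkEventFrom M measurable_fst hi hiC measurableSet_Iic hJ k).inter
        (measurableSet_le_count_linkEventFrom M measurable_snd hi' hiC' measurableSet_Iic hJ k))
  rw [hcond]
  refine (lintegral_mono (measure_inter_le_indicator_add M hi hiC hi' hiC' hJ k)).trans ?_
  rw [lintegral_add_right _ measurable_const, lintegral_indicator_const hclose, lintegral_const,
    measure_univ, mul_one, Measure.map_apply hV hclose]
  gcongr
  exact measure_torusDist_le M hi hi' hii _

lemma measureReal_le_count_linkEvent_inter_le (hi : 1 ≤ i) (hi' : 1 ≤ i') (hii : i ≠ i')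
    (hJ : ∀ j ∈ J, 1 ≤ j ∧ j ∉ ({i, i'} : Set ℕ)) (k : ℕ) :
    P.real ({ω | k ≤ count (linkEvent M r (Iic ρ) i) J ω} ∩
        {ω | k ≤ count (linkEvent M r (Iic ρ) i') J ω}) ≤
      volume.real (Metric.closedBall (0 : EuclideanSpace ℝ (Fin d)) (2 * ρ)) *
        binTail (edgeProb M r (Iic ρ)) J.card k +
      binTail (edgeProb M r (Iic ρ)) J.card k ^ 2 := by
  have h0 : 0 ≤ binTail (edgeProb M r (Iic ρ)) J.card k :=
    measureReal_le_count_linkEventFrom M hi (Set.mem_insert i {i'}) measurableSet_Iic hJ 0 k ▸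
      measureReal_nonneg
  have hball : volume (Metric.closedBall (0 : EuclideanSpace ℝ (Fin d)) (2 * ρ)) ≠ ⊤ :=
    measure_closedBall_lt_top.ne
  refine (ENNReal.toReal_mono (by finiteness)
    (measure_le_count_linkEvent_inter_le M hi hi' hii hJ k)).trans (le_of_eq ?_)
  rw [ENNReal.toReal_add (by finiteness) (by finiteness), ENNReal.toReal_mul,
    ENNReal.toReal_ofReal h0, ENNReal.toReal_ofReal (sq_nonneg _), Measure.real, mul_comm]

end Links

/-! ### Edge probabilities at small scales -/

section EdgeProbability

variable (M : Model d P) {γ r K : ℝ}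

/-- The integral of the connection function over the ball of radius `K`: the part of `M.α` that
comes from edges of length at most `K r` at scale `r`. -/
def truncIntegral (K : ℝ) : ℝ :=
  ∫ y in Metric.closedBall (0 : EuclideanSpace ℝ (Fin d)) K, M.g ‖y‖

lemma tendsto_truncIntegral : Tendsto (fun K : ℕ => truncIntegral M K) atTop (nhds M.α) := by
  have h := tendsto_setIntegral_of_monotone (μ := volume)
    (s := fun K : ℕ => Metric.closedBall (0 : EuclideanSpace ℝ (Fin d)) K)
    (fun K => Metric.isClosed_closedBall.measurableSet)
    (fun K L h => Metric.closedBall_subset_closedBall (Nat.cast_le.2 h))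
    M.g_integrable.integrableOn
  rwa [Metric.iUnion_closedBall_nat, setIntegral_univ, ← M.α_def] at h

lemma g_norm_nonneg (y : EuclideanSpace ℝ (Fin d)) : 0 ≤ M.g ‖y‖ :=
  (M.g_mem _ (norm_nonneg y)).1

lemma lintegral_ofReal_comp_inv_smul {f : EuclideanSpace ℝ (Fin d) → ℝ} (hf : Integrable f)
    (h0 : ∀ y, 0 ≤ f y) (hr : 0 < r) :
    ∫⁻ y, ENNReal.ofReal (f (r⁻¹ • y)) = ENNReal.ofReal (r ^ d * ∫ y, f y) := by
  rw [← ofReal_integral_eq_lintegral_ofReal (hf.comp_smul (inv_ne_zero hr.ne'))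
    (Eventually.of_forall fun y => h0 _), Measure.integral_comp_inv_smul,
    finrank_euclideanSpace_fin, smul_eq_mul, abs_of_pos (pow_pos hr d)]

lemma gExt_norm_div (hr : 0 < r) (y : EuclideanSpace ℝ (Fin d)) :
    gExt M (‖y‖ / r) = M.g ‖r⁻¹ • y‖ := by
  rw [gExt_of_nonneg M (by positivity), norm_smul, norm_inv, Real.norm_of_nonneg hr.le,
    div_eq_inv_mul]

lemma edgeProb_univ_le (hr : 0 < r) : edgeProb M r univ ≤ r ^ d * M.α := by
  have := M.α_pos
  refine ENNReal.toReal_le_of_le_ofReal (by positivity) ?_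
  calc ∫⁻ y in cube d, univ.indicator (fun s => ENNReal.ofReal (gExt M (s / r))) ‖y‖
      ≤ ∫⁻ y, ENNReal.ofReal (M.g ‖r⁻¹ • y‖) := by
        simp only [Set.indicator_univ, gExt_norm_div M hr]
        exact setLIntegral_le_lintegral _ _
    _ = ENNReal.ofReal (r ^ d * M.α) := by
        rw [M.α_def]
        exact lintegral_ofReal_comp_inv_smul M.g_integrable (g_norm_nonneg M) hr

lemma closedBall_subset_cube {ρ : ℝ} (hρ : ρ < 1 / 2) :
    Metric.closedBall (0 : EuclideanSpace ℝ (Fin d)) ρ ⊆ cube d := by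
  intro y hy i
  have hyi := abs_le.1 ((PiLp.norm_apply_le y i).trans (mem_closedBall_zero_iff.1 hy))
  exact ⟨by linarith [hyi.1], by linarith [hyi.2]⟩

lemma edgeProb_Iic (hr : 0 < r) (hK : K * r < 1 / 2) :
    edgeProb M r (Iic (K * r)) = r ^ d * truncIntegral M K := by
  have hball : MeasurableSet (Metric.closedBall (0 : EuclideanSpace ℝ (Fin d)) K) :=
    Metric.isClosed_closedBall.measurableSet
  have hpointwise : ∀ y : EuclideanSpace ℝ (Fin d), (cube d).indicator
        (fun y => (Iic (K * r)).indicator (fun s => ENNReal.ofReal (gExt M (s / r))) ‖y‖) y =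
      ENNReal.ofReal ((Metric.closedBall 0 K).indicator (fun y => M.g ‖y‖) (r⁻¹ • y)) := by
    intro y
    have hiff : r⁻¹ • y ∈ Metric.closedBall (0 : EuclideanSpace ℝ (Fin d)) K ↔ ‖y‖ ≤ K * r := by
      rw [mem_closedBall_zero_iff, norm_smul, norm_inv, Real.norm_of_nonneg hr.le,
        inv_mul_le_iff₀ hr, mul_comm]
    by_cases hy : ‖y‖ ≤ K * r
    · rw [Set.indicator_of_mem (closedBall_subset_cube hK (mem_closedBall_zero_iff.2 hy)),
        Set.indicator_of_mem (mem_Iic.2 hy), Set.indicator_of_mem (hiff.2 hy), gExt_norm_div M hr]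
    · rw [Set.indicator_of_notMem (mt hiff.1 hy), ENNReal.ofReal_zero, Set.indicator_apply_eq_zero]
      exact fun _ => Set.indicator_of_notMem (mt mem_Iic.1 hy) _
  have hnonneg : 0 ≤ truncIntegral M K := setIntegral_nonneg hball fun y _ => g_norm_nonneg M y
  rw [edgeProb, ← lintegral_indicator (measurableSet_cube d), lintegral_congr hpointwise,
    lintegral_ofReal_comp_inv_smul (M.g_integrable.indicator hball)
      (Set.indicator_nonneg fun y _ => g_norm_nonneg M y) hr,
    integral_indicator hball, ← truncIntegral, ENNReal.toReal_ofReal (by positivity)]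

lemma volume_real_closedBall_eq {ρ : ℝ} (hρ : 0 ≤ ρ) :
    volume.real (Metric.closedBall (0 : EuclideanSpace ℝ (Fin d)) ρ) =
      ρ ^ d * volume.real (Metric.closedBall (0 : EuclideanSpace ℝ (Fin d)) 1) := by
  rw [Measure.real, Measure.addHaar_closedBall' _ _ hρ, ENNReal.toReal_mul,
    finrank_euclideanSpace_fin, ENNReal.toReal_ofReal (by positivity), Measure.real]

lemma rhat_pow (hd : d ≠ 0) (hγ : 0 < γ) (n : ℕ) :
    rhat M γ n ^ d = γ * Real.log n / (M.α * n) := by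
  have := M.α_pos
  have := Real.log_natCast_nonneg n
  rw [rhat, one_div, Real.rpow_inv_natCast_pow (by positivity) hd]

lemma rhat_pos (hγ : 0 < γ) {n : ℕ} (hn : 2 ≤ n) : 0 < rhat M γ n := by
  have := M.α_pos
  have : 0 < Real.log n := Real.log_pos (by exact_mod_cast hn)
  have : (0 : ℝ) < n := by positivity
  exact Real.rpow_pos_of_pos (by positivity) _

lemma rhat_anti (hγ : 0 < γ) {n m : ℕ} (hn : 3 ≤ n) (hnm : n ≤ m) : rhat M γ m ≤ rhat M γ n := by
  have hα := M.α_pos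
  have := Real.log_natCast_nonneg m
  have hnm' : (n : ℝ) ≤ m := Nat.cast_le.2 hnm
  have hexp : Real.exp 1 ≤ n := Real.exp_one_lt_three.le.trans (by exact_mod_cast hn)
  have hlog : Real.log m / m ≤ Real.log n / n :=
    Real.log_div_self_antitoneOn hexp (hexp.trans hnm') hnm'
  refine Real.rpow_le_rpow (by positivity) ?_ (by positivity)
  rw [mul_div_mul_comm, mul_div_mul_comm]
  gcongr

lemma tendsto_log_div_natCast : Tendsto (fun n : ℕ => Real.log n / n) atTop (nhds 0) :=
  Real.isLittleO_log_id_atTop.tendsto_div_nhds_zero.comp tendsto_natCast_atTop_atTop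

lemma tendsto_rhat (hd : d ≠ 0) : Tendsto (rhat M γ) atTop (nhds 0) := by
  have h := (tendsto_log_div_natCast.const_mul (γ / M.α)).rpow_const (p := (1 : ℝ) / d)
    (Or.inr (by positivity))
  rw [mul_zero, Real.zero_rpow (by positivity)] at h
  exact h.congr fun n => by rw [rhat, mul_div_mul_comm]

lemma edgeProb_rhat_univ_le (hd : d ≠ 0) (hγ : 0 < γ) {n : ℕ} (hn : 2 ≤ n) :
    edgeProb M (rhat M γ n) univ ≤ γ * (Real.log n / n) := by
  have hα := M.α_pos
  refine (edgeProb_univ_le M (rhat_pos M hγ hn)).trans (le_of_eq ?_)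
  rw [rhat_pow M hd hγ]
  field_simp

lemma eventually_edgeProb_rhat_Iic_eq (hd : d ≠ 0) (hγ : 0 < γ) (K : ℝ) :
    ∀ᶠ n : ℕ in atTop, edgeProb M (rhat M γ n) (Iic (K * rhat M γ n)) =
      γ * (truncIntegral M K / M.α) * (Real.log n / n) := by
  have hα := M.α_pos
  have hsmall := (tendsto_rhat M (γ := γ) hd).const_mul K
  rw [mul_zero] at hsmall
  filter_upwards [hsmall.eventually_lt_const one_half_pos, eventually_ge_atTop 2] with n hn hn2
  rw [edgeProb_Iic M (rhat_pos M hγ hn2) hn, rhat_pow M hd hγ]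
  field_simp

end EdgeProbability

/-! ### The probability of an atypical maximal degree -/

section Tails

variable {Ω : Type*} {mΩ : MeasurableSpace Ω} {P : Measure Ω} (M : Model d P) {r K y γ : ℝ}
  {m₁ m : ℕ}

/-- The event that some vertex among `1, …, m` has at least `y` neighbours among them at
scale `r`. -/
def crowded (r y : ℝ) (m : ℕ) : Set Ω :=
  {ω | ∃ i ∈ Finset.Icc 1 m, y ≤ count (linkEvent M r univ i) ((Finset.Icc 1 m).erase i) ω}

/-- The event that every vertex among `1, …, m₁` has fewer than `y` neighbours among
`m₁ + 1, …, m` at scale `r`. -/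
def sparse (r y : ℝ) (m₁ m : ℕ) : Set Ω :=
  {ω | ∀ i ∈ Finset.Icc 1 m₁, (count (linkEvent M r univ i) (Finset.Ioc m₁ m) ω : ℝ) < y}

lemma crowded_eq_biUnion : crowded M r y m = ⋃ i ∈ Finset.Icc 1 m,
    {ω | ⌈y⌉₊ ≤ count (linkEvent M r univ i) ((Finset.Icc 1 m).erase i) ω} := by
  ext ω
  simp only [crowded, Set.mem_ofPred_eq, mem_iUnion, exists_prop, Nat.ceil_le]

lemma linkEvent_subset_univ (B : Set ℝ) (i j : ℕ) : linkEvent M r B i j ⊆ linkEvent M r univ i j :=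
  fun _ h => ⟨h.1, mem_univ _⟩

lemma sparse_subset (B : Set ℝ) : sparse M r y m₁ m ⊆ {ω | ∀ i ∈ Finset.Icc 1 m₁,
    ω ∉ {ω | ⌈y⌉₊ ≤ count (linkEvent M r B i) (Finset.Ioc m₁ m) ω}} := fun _ hω i hi hle =>
  (hω i hi).not_ge ((Nat.ceil_le.1 hle).trans (Nat.cast_le.2
    (count_mono subset_rfl fun j _ hj => linkEvent_subset_univ M B i j hj)))

lemma eventually_add_mul_log_mul_rpow_le (A B : ℝ) {s t : ℝ} (hst : s < t) :
    ∀ᶠ n : ℕ in atTop, (A + B * Real.log n) * (n : ℝ) ^ s ≤ (n : ℝ) ^ t := by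
  have hδ : 0 < t - s := sub_pos.2 hst
  have hlittle : (fun x : ℝ => A + B * Real.log x) =o[atTop] fun x => x ^ (t - s) :=
    (Asymptotics.isLittleO_const_left.2 (Or.inr
      (tendsto_norm_atTop_atTop.comp (tendsto_rpow_atTop hδ)))).add
      ((isLittleO_log_rpow_atTop hδ).const_mul_left B)
  filter_upwards [tendsto_natCast_atTop_atTop.eventually (hlittle.bound zero_lt_one),
    eventually_gt_atTop 0] with n hn hn0
  have hn0' : (0 : ℝ) < n := Nat.cast_pos.2 hn0
  rw [one_mul, Real.norm_of_nonneg (Real.rpow_nonneg hn0'.le (t - s))] at hn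
  calc (A + B * Real.log n) * (n : ℝ) ^ s ≤ (n : ℝ) ^ (t - s) * (n : ℝ) ^ s := by
        gcongr; exact (le_abs_self _).trans hn
    _ = (n : ℝ) ^ t := by rw [← Real.rpow_add hn0', sub_add_cancel]

lemma tendsto_mul_edgeProb_div_log (hd : d ≠ 0) (hγ : 0 < γ) (K : ℝ) {ε : ℝ} (hε : 0 ≤ ε)
    (hε2 : 2 * ε < 1) :
    Tendsto (fun n : ℕ => ((⌊(1 - ε) * n⌋₊ - ⌊ε * n⌋₊ : ℕ) : ℝ) *
        edgeProb M (rhat M γ n) (Iic (K * rhat M γ n)) / Real.log n) atTop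
      (nhds (γ * (truncIntegral M K / M.α) * (1 - 2 * ε))) := by
  have hfloor : ∀ {a : ℝ}, 0 ≤ a → Tendsto (fun n : ℕ => (⌊a * n⌋₊ : ℝ) / n) atTop (nhds a) :=
    fun ha => (tendsto_nat_floor_mul_div_atTop ha).comp tendsto_natCast_atTop_atTop
  have hlim := ((hfloor (by linarith : 0 ≤ 1 - ε)).sub (hfloor hε)).const_mul
    (γ * (truncIntegral M K / M.α))
  rw [sub_sub, ← two_mul] at hlim
  refine hlim.congr' ?_
  filter_upwards [eventually_edgeProb_rhat_Iic_eq M hd hγ K, eventually_ge_atTop 2] with n hn hn2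
  have hlog : 0 < Real.log n := Real.log_pos (by exact_mod_cast hn2)
  have hle : ⌊ε * (n : ℝ)⌋₊ ≤ ⌊(1 - ε) * (n : ℝ)⌋₊ := by gcongr; linarith
  rw [hn, Nat.cast_sub hle]
  field_simp

lemma exists_poissonRate_truncIntegral_lt_one (hγ : 0 < γ) (hrate : poissonRate γ y < 1) :
    ∃ (K : ℕ) (ε : ℝ), 0 < ε ∧ 2 * ε < 1 ∧ 0 < γ * (truncIntegral M K / M.α) ∧
      poissonRate (γ * (truncIntegral M K / M.α) * (1 - 2 * ε)) y < 1 := by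
  obtain ⟨K, hrateK, hK⟩ : ∃ K : ℕ, poissonRate (γ * (truncIntegral M K / M.α)) y < 1 ∧
      0 < γ * (truncIntegral M K / M.α) := by
    have hlim := ((tendsto_truncIntegral M).div_const M.α).const_mul γ
    rw [div_self M.α_pos.ne', mul_one] at hlim
    exact ((hlim.eventually ((continuousAt_poissonRate_left hγ.ne' y).eventually_lt_const
      hrate)).and (hlim.eventually_const_lt hγ)).exists
  set μ := γ * (truncIntegral M K / M.α)
  have hlim : Tendsto (fun ε : ℝ => μ * (1 - 2 * ε)) (nhdsWithin 0 (Ioi 0)) (nhds μ) :=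
    ((by fun_prop : Continuous fun ε : ℝ => μ * (1 - 2 * ε)).tendsto' 0 μ (by ring)).mono_left
      nhdsWithin_le_nhds
  obtain ⟨ε, ⟨hrateε, hpos⟩, hε⟩ := (((hlim.eventually
    ((continuousAt_poissonRate_left hK.ne' y).eventually_lt_const hrateK)).and
    (hlim.eventually_const_lt hK)).and self_mem_nhdsWithin).exists
  exact ⟨K, ε, hε, by linarith [pos_of_mul_pos_right hpos hK.le], hK, hrateε⟩

lemma exists_rpow_le_binTail (hd : d ≠ 0) (hγ : 0 < γ) (hy : 0 < y)
    (hrate : poissonRate γ y < 1) :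
    ∃ ε > (0 : ℝ), 2 * ε < 1 ∧ ∃ K ≥ (0 : ℝ), ∃ c < (1 : ℝ), ∀ᶠ n : ℕ in atTop, (n : ℝ) ^ (-c) ≤
      binTail (edgeProb M (rhat M γ n) (Iic (K * rhat M γ n))) (⌊(1 - ε) * n⌋₊ - ⌊ε * n⌋₊)
        ⌈y * Real.log n⌉₊ := by
  obtain ⟨K, ε, hε, hε2, hK, hrateε⟩ := exists_poissonRate_truncIntegral_lt_one M hγ hrate
  obtain ⟨c, hc, hc1⟩ := exists_between hrateε
  refine ⟨ε, hε, hε2, K, Nat.cast_nonneg K, c, hc1, ?_⟩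
  have hlog : Tendsto (fun n : ℕ => Real.log n) atTop atTop :=
    Real.tendsto_log_atTop.comp tendsto_natCast_atTop_atTop
  have hprob :
      Tendsto (fun n => edgeProb M (rhat M γ n) (Iic (K * rhat M γ n))) atTop (nhds 0) := by
    have h := tendsto_log_div_natCast.const_mul (γ * (truncIntegral M K / M.α))
    rw [mul_zero] at h
    exact h.congr' ((eventually_edgeProb_rhat_Iic_eq M hd hγ K).mono fun n hn => hn.symm)
  filter_upwards [eventually_exp_le_binTail hlog hprob
    (tendsto_mul_edgeProb_div_log M hd hγ K hε.le hε2)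
    ((tendsto_nat_ceil_mul_div_atTop hy.le).comp hlog) (mul_pos hK (by linarith)) hy hc,
    eventually_gt_atTop 0] with n hn hn0
  rwa [Real.rpow_def_of_pos (Nat.cast_pos.2 hn0), mul_neg, mul_comm]

variable [IsProbabilityMeasure P]

lemma measureReal_crowded_le {μ : ℝ} (hμ : 0 < μ) (hm : m * edgeProb M r univ ≤ μ) (hμy : μ ≤ y) :
    P.real (crowded M r y m) ≤ m * Real.exp (-poissonRate μ y) := by
  have hone : ∀ i ∈ Finset.Icc 1 m,
      P.real {ω | ⌈y⌉₊ ≤ count (linkEvent M r univ i) ((Finset.Icc 1 m).erase i) ω} ≤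
        Real.exp (-poissonRate μ y) := by
    intro i hi
    have hcard : ((Finset.Icc 1 m).erase i).card ≤ m :=
      (Finset.card_erase_le).trans (Nat.card_Icc 1 m).le
    rw [measureReal_le_count_linkEvent M (Finset.mem_Icc.1 hi).1 (fun j hj =>
      ⟨(Finset.mem_Icc.1 (Finset.mem_of_mem_erase hj)).1, Finset.ne_of_mem_erase hj⟩)
      MeasurableSet.univ]
    refine binTail_le_exp_neg_poissonRate (edgeProb_nonneg M) (edgeProb_le_one M MeasurableSet.univ)
      hμ (le_trans ?_ hm) hμy (Nat.le_ceil y)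
    gcongr
    exact edgeProb_nonneg M
  calc P.real (crowded M r y m)
      ≤ ∑ i ∈ Finset.Icc 1 m,
          P.real {ω | ⌈y⌉₊ ≤ count (linkEvent M r univ i) ((Finset.Icc 1 m).erase i) ω} :=
        crowded_eq_biUnion M ▸ measureReal_biUnion_finset_le _ _
    _ ≤ m * Real.exp (-poissonRate μ y) := by
        simpa using Finset.sum_le_card_nsmul _ _ _ hone

lemma exists_measureReal_crowded_le_rpow (hd : d ≠ 0) (hγ : 0 < γ) (hγy : γ < y)
    (hrate : 1 < poissonRate γ y) :
    ∃ ε > (0 : ℝ), ∃ δ > (0 : ℝ), ∀ᶠ n : ℕ in atTop,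
      P.real (crowded M (rhat M γ n) (y * Real.log n) ⌊(1 + ε) * n⌋₊) ≤ (n : ℝ) ^ (-δ) := by
  obtain ⟨ε, ⟨hrateε, hyε⟩, hε⟩ : ∃ ε,
      (1 < poissonRate (γ * (1 + ε)) y ∧ γ * (1 + ε) < y) ∧ 0 < ε := by
    have hlim : Tendsto (fun ε : ℝ => γ * (1 + ε)) (nhdsWithin 0 (Ioi 0)) (nhds γ) :=
      ((by fun_prop : Continuous fun ε : ℝ => γ * (1 + ε)).tendsto' 0 γ (by ring)).mono_left
        nhdsWithin_le_nhds
    exact (((hlim.eventually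
      ((continuousAt_poissonRate_left hγ.ne' y).eventually_const_lt hrate)).and
      (hlim.eventually_lt_const hγy)).and self_mem_nhdsWithin).exists
  set ρ := poissonRate (γ * (1 + ε)) y with hρ
  refine ⟨ε, hε, (ρ - 1) / 2, by linarith, ?_⟩
  filter_upwards [eventually_ge_atTop 2, eventually_add_mul_log_mul_rpow_le (1 + ε) 0
    (show 1 - ρ < -((ρ - 1) / 2) by linarith)] with n hn hrpow
  have hn0 : (0 : ℝ) < n := by positivity
  have hlog : 0 < Real.log n := Real.log_pos (by exact_mod_cast hn)
  have hfloor : (⌊(1 + ε) * n⌋₊ : ℝ) ≤ (1 + ε) * n := Nat.floor_le (by positivity)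
  have hmean : ⌊(1 + ε) * n⌋₊ * edgeProb M (rhat M γ n) univ ≤ γ * (1 + ε) * Real.log n :=
    calc ⌊(1 + ε) * n⌋₊ * edgeProb M (rhat M γ n) univ
        ≤ (1 + ε) * n * (γ * (Real.log n / n)) :=
          mul_le_mul hfloor (edgeProb_rhat_univ_le M hd hγ hn) (edgeProb_nonneg M) (by positivity)
      _ = γ * (1 + ε) * Real.log n := by field_simp
  calc P.real (crowded M (rhat M γ n) (y * Real.log n) ⌊(1 + ε) * n⌋₊)
      ≤ ⌊(1 + ε) * n⌋₊ * Real.exp (-(ρ * Real.log n)) := by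
        rw [hρ, ← poissonRate_mul_mul hlog.ne']
        exact measureReal_crowded_le M (by positivity) hmean (by gcongr)
    _ ≤ (1 + ε) * n * Real.exp (-(ρ * Real.log n)) := by gcongr
    _ = (1 + ε + 0 * Real.log n) * (n : ℝ) ^ (1 - ρ) := by
        rw [Real.rpow_sub hn0, Real.rpow_one, Real.rpow_def_of_pos hn0, Real.exp_neg,
          mul_comm ρ]
        ring
    _ ≤ (n : ℝ) ^ (-((ρ - 1) / 2)) := hrpow

lemma measureReal_sparse_le {ρ : ℝ} (hm₁ : 1 ≤ m₁)
    (hp : 0 < binTail (edgeProb M r (Iic ρ)) (m - m₁) ⌈y⌉₊) :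
    P.real (sparse M r y m₁ m) ≤
      (1 / m₁ + volume.real (Metric.closedBall (0 : EuclideanSpace ℝ (Fin d)) (2 * ρ))) /
        binTail (edgeProb M r (Iic ρ)) (m - m₁) ⌈y⌉₊ := by
  have hneighbour : ∀ j ∈ Finset.Ioc m₁ m, ∀ i ∈ Finset.Icc 1 m₁, 1 ≤ j ∧ j ≠ i := by
    intro j hj i hi
    simp only [Finset.mem_Icc, Finset.mem_Ioc] at hi hj
    omega
  have hcentre : ∀ i ∈ Finset.Icc 1 m₁, 1 ≤ i := fun i hi => (Finset.mem_Icc.1 hi).1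
  have hsecond := measureReal_forall_notMem_le (P := P) (s := Finset.Icc 1 m₁)
    (A := fun i => {ω | ⌈y⌉₊ ≤ count (linkEvent M r (Iic ρ) i) (Finset.Ioc m₁ m) ω})
    ⟨1, Finset.mem_Icc.2 ⟨le_rfl, hm₁⟩⟩ hp measureReal_nonneg
    (fun i _ => measurable_count
      (fun j _ => measurableSet_linkEvent M measurableSet_Iic i j) measurableSet_Ici)
    (fun i hi => by
      rw [measureReal_le_count_linkEvent M (hcentre i hi) (fun j hj => hneighbour j hj i hi)
        measurableSet_Iic, Nat.card_Ioc])
    (fun i hi i' hi' hii => by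
      have h := measureReal_le_count_linkEvent_inter_le M (r := r) (ρ := ρ) (hcentre i hi)
        (hcentre i' hi') hii (J := Finset.Ioc m₁ m) (fun j hj => ⟨(hneighbour j hj i hi).1, by
          simp [(hneighbour j hj i hi).2, (hneighbour j hj i' hi').2]⟩) ⌈y⌉₊
      rwa [Nat.card_Ioc] at h)
  rw [Nat.card_Icc, Nat.add_sub_cancel, ← div_div, ← add_div] at hsecond
  exact (measureReal_mono (sparse_subset M (Iic ρ))).trans hsecond

lemma one_div_natFloor_le {x : ℝ} (hx : 2 ≤ x) : 1 / (⌊x⌋₊ : ℝ) ≤ 2 / x := by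
  have hfloor := Nat.lt_floor_add_one x
  rw [← one_div_div x 2]
  exact one_div_le_one_div_of_le (by positivity) (by linarith)

lemma exists_measureReal_sparse_le_rpow (hd : d ≠ 0) (hγ : 0 < γ) (hy : 0 < y)
    (hrate : poissonRate γ y < 1) :
    ∃ ε > (0 : ℝ), 2 * ε < 1 ∧ ∃ δ > (0 : ℝ), ∀ᶠ n : ℕ in atTop,
      P.real (sparse M (rhat M γ n) (y * Real.log n) ⌊ε * n⌋₊ ⌊(1 - ε) * n⌋₊) ≤
        (n : ℝ) ^ (-δ) := by
  obtain ⟨ε, hε, hε2, K, hK, c, hc, htail⟩ := exists_rpow_le_binTail M hd hγ hy hrate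
  set C := (2 * K) ^ d * volume.real (Metric.closedBall (0 : EuclideanSpace ℝ (Fin d)) 1) * γ / M.α
  refine ⟨ε, hε, hε2, (1 - c) / 2, by linarith, ?_⟩
  filter_upwards [htail, eventually_ge_atTop 2,
    tendsto_natCast_atTop_atTop.eventually_ge_atTop (2 / ε),
    eventually_add_mul_log_mul_rpow_le (2 / ε) C (show c - 1 < -((1 - c) / 2) by linarith)]
    with n htail hn hεn hrpow
  have hn0 : (0 : ℝ) < n := by positivity
  have hr := rhat_pos M hγ hn
  have hpow : 0 < (n : ℝ) ^ (-c) := Real.rpow_pos_of_pos hn0 _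
  have hεn' : 2 ≤ ε * n := (div_le_iff₀' hε).1 hεn
  have hinv := (one_div_natFloor_le hεn').trans_eq (div_div 2 ε (n : ℝ)).symm
  have hvolume : volume.real (Metric.closedBall (0 : EuclideanSpace ℝ (Fin d))
      (2 * (K * rhat M γ n))) = C * Real.log n / n := by
    rw [volume_real_closedBall_eq (by positivity), ← mul_assoc 2, mul_pow, rhat_pow M hd hγ]
    ring
  calc P.real (sparse M (rhat M γ n) (y * Real.log n) ⌊ε * n⌋₊ ⌊(1 - ε) * n⌋₊)
      ≤ (2 / ε / n + C * Real.log n / n) / (n : ℝ) ^ (-c) := by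
        refine (measureReal_sparse_le M (Nat.le_floor (by push_cast; linarith))
          (hpow.trans_le htail)).trans ?_
        have hvolume_nonneg : 0 ≤ C * Real.log n / n := hvolume ▸ measureReal_nonneg
        rw [hvolume]
        exact div_le_div₀ (add_nonneg (by positivity) hvolume_nonneg) (by gcongr) hpow htail
    _ = (2 / ε + C * Real.log n) * (n : ℝ) ^ (c - 1) := by
        rw [← add_div, Real.rpow_neg hn0.le, Real.rpow_sub_one hn0.ne']
        field_simp
    _ ≤ (n : ℝ) ^ (-((1 - c) / 2)) := hrpow

end Tails

/-! ### The number of vertices -/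

section Poisson

lemma hasSum_poisson_mul_exp (r t : ℝ) :
    HasSum (fun k : ℕ => Real.exp (-r) * r ^ k / k.factorial * Real.exp (t * k))
      (Real.exp (r * (Real.exp t - 1))) := by
  have h := (NormedSpace.expSeries_div_hasSum_exp (r * Real.exp t)).mul_left (Real.exp (-r))
  rw [← Real.exp_eq_exp_ℝ, ← Real.exp_add] at h
  convert! h using 1
  · ext k
    rw [mul_pow, ← Real.exp_nat_mul, mul_comm t]
    ring
  · congr 1
    ring

lemma integrable_exp_mul_poissonMeasure (r : NNReal) (t : ℝ) :
    Integrable (fun k : ℕ => Real.exp (t * k)) (poissonMeasure r) := by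
  rw [integrable_poissonMeasure_iff]
  simpa using (hasSum_poisson_mul_exp r t).summable

lemma mgf_poissonMeasure (r : NNReal) (t : ℝ) :
    mgf (fun k : ℕ => (k : ℝ)) (poissonMeasure r) t = Real.exp (r * (Real.exp t - 1)) := by
  rw [mgf, integral_poissonMeasure]
  simpa using (hasSum_poisson_mul_exp r t).tsum_eq

variable {r : NNReal} {y : ℝ}

lemma neg_log_mul_add_eq_neg_poissonRate (hr : 0 < r) (hy : 0 < y) :
    -Real.log (y / r) * y + r * (Real.exp (Real.log (y / r)) - 1) = -poissonRate r y := by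
  have hr' : (0 : ℝ) < r := hr
  rw [Real.exp_log (by positivity), poissonRate_eq hr'.ne']
  field_simp
  ring

lemma poissonMeasure_real_ge_le (hr : 0 < r) (hry : r ≤ y) :
    (poissonMeasure r).real {k : ℕ | y ≤ k} ≤ Real.exp (-poissonRate r y) := by
  have hr' : (0 : ℝ) < r := hr
  have h := measure_ge_le_exp_mul_mgf (X := fun k : ℕ => (k : ℝ)) y
    (Real.log_nonneg ((one_le_div hr').2 hry)) (integrable_exp_mul_poissonMeasure r _)
  rwa [mgf_poissonMeasure, ← Real.exp_add,
    neg_log_mul_add_eq_neg_poissonRate hr (hr'.trans_le hry)] at h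

lemma poissonMeasure_real_le_le (hr : 0 < r) (hy : 0 < y) (hyr : y ≤ r) :
    (poissonMeasure r).real {k : ℕ | (k : ℝ) ≤ y} ≤ Real.exp (-poissonRate r y) := by
  have hr' : (0 : ℝ) < r := hr
  have h := measure_le_le_exp_mul_mgf (X := fun k : ℕ => (k : ℝ)) y
    (Real.log_nonpos (by positivity) ((div_le_one hr').2 hyr))
    (integrable_exp_mul_poissonMeasure r _)
  rwa [mgf_poissonMeasure, ← Real.exp_add, neg_log_mul_add_eq_neg_poissonRate hr hy] at h

end Poisson

section VertexCount

variable (M : Model d P)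

lemma map_N (n : ℕ) : P.map (M.N n) = poissonMeasure n := by
  refine Measure.ext_of_singleton fun k => ?_
  rw [Measure.map_apply (M.N_meas n) (measurableSet_singleton k), poissonMeasure_singleton]
  exact M.N_poisson n k

lemma measureReal_N_mem (n : ℕ) (S : Set ℕ) :
    P.real {ω | M.N n ω ∈ S} = (poissonMeasure n).real S := by
  rw [← map_N M n, map_measureReal_apply (M.N_meas n) (Set.to_countable S).measurableSet]
  rfl

variable [IsFiniteMeasure P]

lemma ae_eventually_notMem_of_summable {B : ℕ → Set Ω} {u : ℕ → ℝ} (hu : Summable u)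
    (hB : ∀ᶠ n in atTop, P.real (B n) ≤ u n) : ∀ᵐ ω ∂P, ∀ᶠ n in atTop, ω ∉ B n := by
  have hsum : Summable fun n => P.real (B n) := hu.of_norm_bounded_eventually_nat
    (hB.mono fun n hn => (Real.norm_of_nonneg measureReal_nonneg).trans_le hn)
  refine ae_eventually_notMem (hsum.tsum_ofReal_ne_top.symm.trans_eq ?_).symm
  exact tsum_congr fun n => ofReal_measureReal

lemma ae_eventually_N_notMem {S : ℕ → Set ℕ} {x : ℝ} (hx : 0 < x) (hx1 : x ≠ 1)
    (hS : ∀ n : ℕ, 0 < n → (poissonMeasure n).real (S n) ≤ Real.exp (-poissonRate n (x * n))) :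
    ∀ᵐ ω ∂P, ∀ᶠ n in atTop, M.N n ω ∉ S n := by
  have hrate : 0 < poissonRate 1 x := poissonRate_pos one_pos hx.le hx1
  refine ae_eventually_notMem_of_summable (B := fun n => {ω | M.N n ω ∈ S n})
    (u := fun n : ℕ => Real.exp (n * -poissonRate 1 x))
    (Real.summable_exp_nat_mul_iff.2 (neg_neg_of_pos hrate)) ?_
  filter_upwards [eventually_gt_atTop 0] with n hn
  have hn0 : (n : ℝ) ≠ 0 := Nat.cast_ne_zero.2 hn.ne'
  calc P.real {ω | M.N n ω ∈ S n} = (poissonMeasure n).real (S n) := measureReal_N_mem M n _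
    _ ≤ Real.exp (-poissonRate (1 * n) (x * n)) := by rw [one_mul]; exact hS n hn
    _ = Real.exp (n * -poissonRate 1 x) := by rw [poissonRate_mul_mul hn0]; ring_nf

lemma ae_eventually_N_le {x : ℝ} (hx : 1 < x) :
    ∀ᵐ ω ∂P, ∀ᶠ n : ℕ in atTop, (M.N n ω : ℝ) ≤ x * n := by
  filter_upwards [ae_eventually_N_notMem M (S := fun n => {k | x * n ≤ k})
    (zero_lt_one.trans hx) hx.ne' fun n hn => poissonMeasure_real_ge_le (Nat.cast_pos.2 hn)
      (le_mul_of_one_le_left (Nat.cast_nonneg n) hx.le)] with ω hω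
  exact hω.mono fun n hn => (not_le.1 hn).le

lemma ae_eventually_le_N {x : ℝ} (hx : 0 < x) (hx1 : x < 1) :
    ∀ᵐ ω ∂P, ∀ᶠ n : ℕ in atTop, x * n ≤ M.N n ω := by
  filter_upwards [ae_eventually_N_notMem M (S := fun n => {k | (k : ℝ) ≤ x * n}) hx hx1.ne
    fun n hn => poissonMeasure_real_le_le (Nat.cast_pos.2 hn)
      (mul_pos hx (Nat.cast_pos.2 hn)) (mul_le_of_le_one_left (Nat.cast_nonneg n) hx1.le)]
    with ω hω
  exact hω.mono fun n hn => (not_le.1 hn).le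

end VertexCount

/-! ### Interpolation between powers -/

section Interpolation

lemma tendsto_nthRoot_atTop {p : ℕ} (hp : p ≠ 0) : Tendsto (Nat.nthRoot p) atTop atTop :=
  tendsto_atTop.2 fun b => (eventually_ge_atTop (b ^ p)).mono fun _ hn =>
    (Nat.le_nthRoot_iff hp).2 hn

lemma eventually_succ_pow_le (p : ℕ) {η : ℝ} (hη : 1 < η) :
    ∀ᶠ k : ℕ in atTop, (((k + 1) ^ p : ℕ) : ℝ) ≤ η * ((k ^ p : ℕ) : ℝ) := by
  have h : Tendsto (fun k : ℕ => (1 + 1 / (k : ℝ)) ^ p) atTop (nhds 1) := by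
    simpa using (tendsto_one_div_atTop_nhds_zero_nat.const_add (1 : ℝ)).pow p
  filter_upwards [h.eventually_lt_const hη, eventually_gt_atTop 0] with k hk hk0
  have hk0' : (0 : ℝ) < k := Nat.cast_pos.2 hk0
  push_cast
  calc ((k : ℝ) + 1) ^ p = (1 + 1 / (k : ℝ)) ^ p * k ^ p := by
        rw [← mul_pow, add_mul, one_mul, one_div_mul_cancel hk0'.ne']
    _ ≤ η * k ^ p := by gcongr

/-- The bound becomes summable along the powers `k ^ p` with `p > 1 / δ`. -/
lemma ae_eventually_exists_notMem_between [IsFiniteMeasure P] {B : ℕ → Set Ω} {δ η : ℝ}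
    (hδ : 0 < δ) (hη : 1 < η) (hB : ∀ᶠ n : ℕ in atTop, P.real (B n) ≤ (n : ℝ) ^ (-δ)) :
    ∀ᵐ ω ∂P, ∀ᶠ n : ℕ in atTop, ∃ m m' : ℕ,
      m ≤ n ∧ n ≤ m' ∧ (m' : ℝ) ≤ η * m ∧ ω ∉ B m ∧ ω ∉ B m' := by
  obtain ⟨p, hp⟩ := exists_nat_gt (1 / δ)
  have hδp : 1 < δ * p := (div_lt_iff₀' hδ).1 hp
  have hp0 : p ≠ 0 := fun h => by norm_num [h] at hδp
  have hpow : ∀ᶠ k : ℕ in atTop, P.real (B (k ^ p)) ≤ (k : ℝ) ^ (-(δ * p)) := by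
    filter_upwards [(tendsto_pow_atTop hp0).eventually hB] with k hk
    rwa [Nat.cast_pow, ← Real.rpow_natCast_mul (Nat.cast_nonneg k), mul_neg, mul_comm] at hk
  filter_upwards [ae_eventually_notMem_of_summable
    (Real.summable_nat_rpow.2 (neg_lt_neg hδp)) hpow] with ω hω
  have hroot := tendsto_nthRoot_atTop hp0
  filter_upwards [hroot.eventually hω, ((tendsto_add_atTop_nat 1).comp hroot).eventually hω,
    hroot.eventually (eventually_succ_pow_le p hη)] with n hm hm' hratio
  exact ⟨Nat.nthRoot p n ^ p, (Nat.nthRoot p n + 1) ^ p, Nat.pow_nthRoot_le (Or.inl hp0),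
    (Nat.lt_pow_nthRoot_add_one hp0 n).le, hratio, hm, hm'⟩

variable (M : Model d P) {n m₁ m : ℕ} {r r' y : ℝ} {ω : Ω}

lemma linkEvent_mono (hr : 0 < r) (hrr : r ≤ r') (B : Set ℝ) (i j : ℕ) :
    linkEvent M r B i j ⊆ linkEvent M r' B i j := fun _ h =>
  ⟨h.1.trans (antitone_gExt M (div_le_div_of_nonneg_left (torusDist_nonneg _ _) hr hrr)), h.2⟩

lemma deg_eq_count {i : ℕ} (hr : 0 ≤ r) (hi : i ∈ Finset.Icc 1 (M.N n ω)) :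
    deg M n r ω i = count (linkEvent M r univ i) ((Finset.Icc 1 (M.N n ω)).erase i) ω := by
  classical
  rw [deg, count, ← Set.ncard_coe_finset]
  congr 1
  ext j
  have hi' := Finset.mem_Icc.1 hi
  simp only [adj, linkEvent, linked, edgeVar, Set.mem_ofPred_eq, Finset.coe_filter,
    Finset.mem_erase, Finset.mem_Icc, mem_univ, and_true,
    gExt_of_nonneg M (div_nonneg (torusDist_nonneg _ _) hr)]
  tauto

lemma maxDeg_le_of_notMem_crowded (hr : 0 < r) (hrr : r ≤ r') (hy : 0 ≤ y) (hN : M.N n ω ≤ m)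
    (h : ω ∉ crowded M r' y m) : (maxDeg M n r ω : ℝ) ≤ y := by
  refine (Nat.le_floor_iff hy).1 (Finset.sup_le fun i hi => Nat.le_floor ?_)
  have hsub : Finset.Icc 1 (M.N n ω) ⊆ Finset.Icc 1 m := Finset.Icc_subset_Icc_right hN
  have hlt : (count (linkEvent M r' univ i) ((Finset.Icc 1 m).erase i) ω : ℝ) < y :=
    not_le.1 fun hle => h ⟨i, hsub hi, hle⟩
  rw [deg_eq_count M hr.le hi]
  exact (Nat.cast_le.2 (count_mono (Finset.erase_subset_erase i hsub)
    fun j _ hj => linkEvent_mono M hr hrr univ i j hj)).trans hlt.le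

lemma le_maxDeg_of_notMem_sparse (hr' : 0 < r') (hrr : r' ≤ r) (hN : m ≤ M.N n ω) (hm : m₁ ≤ m)
    (h : ω ∉ sparse M r' y m₁ m) : y ≤ maxDeg M n r ω := by
  obtain ⟨i, hi, hle⟩ : ∃ i ∈ Finset.Icc 1 m₁,
      y ≤ count (linkEvent M r' univ i) (Finset.Ioc m₁ m) ω := by
    by_contra! hlt
    exact h hlt
  have hiN : i ∈ Finset.Icc 1 (M.N n ω) := Finset.Icc_subset_Icc_right (hm.trans hN) hi
  have hdeg : count (linkEvent M r' univ i) (Finset.Ioc m₁ m) ω ≤ deg M n r ω i := by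
    rw [deg_eq_count M (hr'.le.trans hrr) hiN]
    refine count_mono (fun j hj => ?_) fun j _ hj => linkEvent_mono M hr' hrr univ i j hj
    simp only [Finset.mem_Icc, Finset.mem_Ioc, Finset.mem_erase] at hi hj ⊢
    omega
  exact hle.trans (Nat.cast_le.2 (hdeg.trans (Finset.le_sup (f := deg M n r ω) hiN)))

variable [IsProbabilityMeasure P] {γ : ℝ}

lemma ae_eventually_maxDeg_le (hd : d ≠ 0) (hγ : 0 < γ) (hy : γ * Hplusinv (1 / γ) < y) :
    ∀ᵐ ω ∂P, ∀ᶠ n : ℕ in atTop, (maxDeg M n (rhat M γ n) ω : ℝ) ≤ y * Real.log n := by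
  have hγy : γ < y := (lt_mul_Hplusinv hγ).trans hy
  obtain ⟨ε, hε, δ, hδ, htail⟩ :=
    exists_measureReal_crowded_le_rpow M hd hγ hγy (one_lt_poissonRate hγ hy)
  have hη : 1 < √(1 + ε) := by rw [Real.lt_sqrt zero_le_one]; linarith
  filter_upwards [ae_eventually_exists_notMem_between hδ hη htail, ae_eventually_N_le M hη]
    with ω hB hN
  filter_upwards [hB, hN, tendsto_natCast_atTop_atTop.eventually_ge_atTop (√(1 + ε) * 3)]
    with n ⟨m, m', hmn, hnm', hratio, hmem, _⟩ hNn hn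
  have hnm : (n : ℝ) ≤ √(1 + ε) * m := (Nat.cast_le.2 hnm').trans hratio
  have hm : 3 ≤ m := by
    exact_mod_cast le_of_mul_le_mul_left (hn.trans hnm) (zero_lt_one.trans hη)
  have hNm : M.N n ω ≤ ⌊(1 + ε) * m⌋₊ := Nat.le_floor <|
    calc (M.N n ω : ℝ) ≤ √(1 + ε) * (√(1 + ε) * m) := hNn.trans (by gcongr)
      _ = (1 + ε) * m := by rw [← mul_assoc, Real.mul_self_sqrt (by positivity)]
  have hy0 : 0 ≤ y := (hγ.trans hγy).le
  calc (maxDeg M n (rhat M γ n) ω : ℝ) ≤ y * Real.log m :=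
        maxDeg_le_of_notMem_crowded M (rhat_pos M hγ (by omega)) (rhat_anti M hγ hm hmn)
          (mul_nonneg hy0 (Real.log_natCast_nonneg m)) hNm hmem
    _ ≤ y * Real.log n := by gcongr

lemma ae_eventually_le_maxDeg_of_poissonRate_lt_one (hd : d ≠ 0) (hγ : 0 < γ) (hy : 0 < y)
    (hrate : poissonRate γ y < 1) :
    ∀ᵐ ω ∂P, ∀ᶠ n : ℕ in atTop, y * Real.log n ≤ maxDeg M n (rhat M γ n) ω := by
  obtain ⟨ε, hε, hε2, δ, hδ, htail⟩ := exists_measureReal_sparse_le_rpow M hd hγ hy hrate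
  have hx0 : 0 < √(1 - ε) := Real.sqrt_pos.2 (by linarith)
  have hx1 : √(1 - ε) < 1 := by rw [Real.sqrt_lt' one_pos]; linarith
  filter_upwards [ae_eventually_exists_notMem_between hδ ((one_lt_inv₀ hx0).2 hx1) htail,
    ae_eventually_le_N M hx0 hx1] with ω hB hN
  filter_upwards [hB, hN, eventually_ge_atTop 3]
    with n ⟨m, m', hmn, hnm', hratio, _, hmem⟩ hNn hn
  have hNm : ⌊(1 - ε) * m'⌋₊ ≤ M.N n ω := Nat.floor_le_of_le <|
    calc (1 - ε) * m' = √(1 - ε) * (√(1 - ε) * m') := by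
          rw [← mul_assoc, Real.mul_self_sqrt (by linarith)]
      _ ≤ √(1 - ε) * n := by
          gcongr
          exact ((le_inv_mul_iff₀ hx0).1 hratio).trans (Nat.cast_le.2 hmn)
      _ ≤ M.N n ω := hNn
  have hfloor : ⌊ε * m'⌋₊ ≤ ⌊(1 - ε) * m'⌋₊ := by gcongr; linarith
  calc y * Real.log n ≤ y * Real.log m' := by gcongr
    _ ≤ maxDeg M n (rhat M γ n) ω := le_maxDeg_of_notMem_sparse M
        (rhat_pos M hγ (by omega)) (rhat_anti M hγ hn hnm') hNm hfloor hmem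

lemma ae_eventually_le_maxDeg (hd : d ≠ 0) (hγ : 0 < γ) (hy : y < γ * Hplusinv (1 / γ)) :
    ∀ᵐ ω ∂P, ∀ᶠ n : ℕ in atTop, y * Real.log n ≤ maxDeg M n (rhat M γ n) ω := by
  filter_upwards [ae_eventually_le_maxDeg_of_poissonRate_lt_one M hd hγ (lt_max_of_lt_right hγ)
    (poissonRate_lt_one hγ (le_max_right y γ) (max_lt hy (lt_mul_Hplusinv hγ)))] with ω hω
  filter_upwards [hω] with n hn
  exact (mul_le_mul_of_nonneg_right (le_max_left y γ) (Real.log_natCast_nonneg n)).trans hn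

end Interpolation

/-! ### The limit -/

section Limit

lemma ae_tendsto_of_forall_ae_eventually {f : ℕ → Ω → ℝ} {L : ℝ}
    (hupper : ∀ y > L, ∀ᵐ ω ∂P, ∀ᶠ n in atTop, f n ω ≤ y)
    (hlower : ∀ y < L, ∀ᵐ ω ∂P, ∀ᶠ n in atTop, y ≤ f n ω) :
    ∀ᵐ ω ∂P, Tendsto (fun n => f n ω) atTop (nhds L) := by
  have hupper' : ∀ᵐ ω ∂P, ∀ q : ℚ, L < q → ∀ᶠ n in atTop, f n ω ≤ q :=
    ae_all_iff.2 fun q => eventually_imp_distrib_left.2 fun hq => hupper q hq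
  have hlower' : ∀ᵐ ω ∂P, ∀ q : ℚ, (q : ℝ) < L → ∀ᶠ n in atTop, (q : ℝ) ≤ f n ω :=
    ae_all_iff.2 fun q => eventually_imp_distrib_left.2 fun hq => hlower q hq
  filter_upwards [hupper', hlower'] with ω hup hlow
  refine tendsto_order.2 ⟨fun y hy => ?_, fun y hy => ?_⟩
  · obtain ⟨q, hyq, hqL⟩ := exists_rat_btwn hy
    exact (hlow q hqL).mono fun n hn => hyq.trans_le hn
  · obtain ⟨q, hLq, hqy⟩ := exists_rat_btwn hy
    exact (hup q hLq).mono fun n hn => hn.trans_lt hqy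

theorem maxDeg_tendsto_general (hd : d ≠ 0) [IsProbabilityMeasure P] (M : Model d P) {γ : ℝ}
    (hγ : 0 < γ) :
    ∀ᵐ ω ∂P, Tendsto (fun n : ℕ => (maxDeg M n (rhat M γ n) ω : ℝ) / Real.log n) atTop
      (nhds (γ * Hplusinv (1 / γ))) := by
  have hlog : ∀ᶠ n : ℕ in atTop, 0 < Real.log n :=
    (Real.tendsto_log_atTop.comp tendsto_natCast_atTop_atTop).eventually_gt_atTop 0
  refine ae_tendsto_of_forall_ae_eventually (fun y hy => ?_) (fun y hy => ?_)
  · filter_upwards [ae_eventually_maxDeg_le M hd hγ hy] with ω hω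
    filter_upwards [hω, hlog] with n hn hn0 using (div_le_iff₀ hn0).2 hn
  · filter_upwards [ae_eventually_le_maxDeg M hd hγ hy] with ω hω
    filter_upwards [hω, hlog] with n hn hn0 using (le_div_iff₀ hn0).2 hn

end Limit

/-- Theorem 3(ii): a.s. `Δ_n/log n → γ H₊⁻¹(1/γ)`. -/
theorem maxDeg_tendsto (hd : 2 ≤ d) [IsProbabilityMeasure P] (M : Model d P)
    {c : ℝ} (hc : 0 < c)
    (hg : M.g =o[atTop] fun r : ℝ => Real.exp (-(c * r)))
    {γ : ℝ} (hγ : 0 < γ) :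
    ∀ᵐ ω ∂P, Tendsto
      (fun n : ℕ => (maxDeg M n (rhat M γ n) ω : ℝ) / Real.log n) atTop
        (nhds (γ * Hplusinv (1 / γ))) :=
  maxDeg_tendsto_general (by omega) M hγ

end RCM
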